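/- Let f:[a,b]→ℝ be measurable and F:[a,b]→ℝ continuous with F(a)=0. Then the following are equivalent: (i) f ∈ Den[a,b] and F(x)=∫_a^x f; (ii) there is a countable ordinal α with f ∈ Den_α[a,b] and F(x)=∫_a^x f; (iii) there is a countable ordinal α with D_{f,F}^{α+1}([a,b]) = ∅ and F′ = f a.e.; (iv) there is a countable ordinal α with D_F^{α+1}([a,b]) = ∅ and F′ = f a.e. -/

import Mathlib

open MeasureTheory Set Filter

noncomputable section

attribute [local instance] Classical.propDecidable

/-- The oscillation `ω(F, J)` of `F` on the set `J`. -/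
def osc (F : ℝ → ℝ) (J : Set ℝ) : ℝ :=
  sSup {d : ℝ | ∃ x ∈ J, ∃ y ∈ J, d = |F x - F y|}

/-- `D` is a `K`-edged pre-partition of `[a,b]`: a finite nonempty collection of
pairwise non-overlapping closed subintervals of `[a,b]` whose endpoints lie in `K`. -/
def IsPrePartition (a b : ℝ) (K : Set ℝ) (D : Finset (ℝ × ℝ)) : Prop :=
  D.Nonempty ∧
  (∀ p ∈ D, p.1 ≤ p.2 ∧ p.1 ∈ K ∧ p.2 ∈ K ∧ Icc p.1 p.2 ⊆ Icc a b) ∧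
  (D : Set (ℝ × ℝ)).Pairwise fun p q => p.2 ≤ q.1 ∨ q.2 ≤ p.1

/-- `F ∈ AC_*(K)`: absolute continuity in the restricted sense on `K`. -/
def ACStar (a b : ℝ) (F : ℝ → ℝ) (K : Set ℝ) : Prop :=
  ∀ ε > (0:ℝ), ∃ δ > (0:ℝ), ∀ D : Finset (ℝ × ℝ), IsPrePartition a b K D →
    (∑ p ∈ D, (p.2 - p.1)) < δ → (∑ p ∈ D, osc F (Icc p.1 p.2)) < ε

/-- `F ∈ ACG_*(K)`: `K` is a countable union of closed sets `Kₙ ⊆ [a,b]` with `F ∈ AC_*(Kₙ)`. -/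
def ACGStar (a b : ℝ) (F : ℝ → ℝ) (K : Set ℝ) : Prop :=
  ∃ C : ℕ → Set ℝ, (∀ n, IsClosed (C n) ∧ C n ⊆ Icc a b ∧ ACStar a b F (C n)) ∧
    K = ⋃ n, C n

/-- `F` is the indefinite Denjoy integral of `f` on `[a,b]`:
`F` is continuous on `[a,b]`, `F(a) = 0`, `F ∈ ACG_*([a,b])`, and `F' = f` a.e. on `[a,b]`. -/
def HasDenjoyIntegralFn (a b : ℝ) (f F : ℝ → ℝ) : Prop :=
  ContinuousOn F (Icc a b) ∧ F a = 0 ∧ ACGStar a b F (Icc a b) ∧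
    ∀ᵐ x ∂(volume.restrict (Icc a b)), HasDerivAt F (f x) x

/-- `f ∈ Den[a,b]`: `f` is Denjoy integrable on `[a,b]`. -/
def DenjoyIntegrable (a b : ℝ) (f : ℝ → ℝ) : Prop :=
  ∃ F : ℝ → ℝ, HasDenjoyIntegralFn a b f F

/-- The Denjoy integral `∫_a^b f` (junk value `0` if `f` is not Denjoy integrable). -/
def denjoyIntegral (a b : ℝ) (f : ℝ → ℝ) : ℝ :=
  if h : DenjoyIntegrable a b f then Classical.choose h b else 0

/-- The derivative `D_f(K)`: points of `K` at which `f` is not locally Lebesgue integrable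
relative to `K`. -/
def Df (f : ℝ → ℝ) (K : Set ℝ) : Set ℝ :=
  {x ∈ K | ∀ c d : ℝ, c < x → x < d → ¬ IntegrableOn f (Icc c d ∩ K) volume}

/-- The derivative `D_F(K)`: points of `K` at which `F` is not locally `AC_*` relative to `K`. -/
def DF (a b : ℝ) (F : ℝ → ℝ) (K : Set ℝ) : Set ℝ :=
  {x ∈ K | ∀ c d : ℝ, c < x → x < d → ¬ ACStar a b F (Icc c d ∩ K)}

/-- The derivative `D_{f,F}(K) = D_f(K) ∪ D_F(K)`. -/
def DfF (a b : ℝ) (f F : ℝ → ℝ) (K : Set ℝ) : Set ℝ := Df f K ∪ DF a b F K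

/-- Transfinite iterates of a derivative operation on sets:
`D⁰(K) = K`, `D^(α+1)(K) = D(D^α(K))`, and `D^α(K) = ⋂_(β<α) D^β(K)` for limit `α`. -/
def derivIter (D : Set ℝ → Set ℝ) (K : Set ℝ) (α : Ordinal.{0}) : Set ℝ :=
  Ordinal.limitRecOn α K (fun _ ih => D ih) (fun o _ ih => ⋂ β : Iio o, ih β.1 β.2)

/-- `D^∞(K) = ⋂_(α<ω₁) D^α(K)`. -/
def derivInfty (D : Set ℝ → Set ℝ) (K : Set ℝ) : Set ℝ :=
  ⋂ (α : Ordinal.{0}) (_ : α.card ≤ Cardinal.aleph0), derivIter D K α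

/-- `Lim(X)`: the improper integrals of `X`. -/
def LimSet (a b : ℝ) (X : Set (ℝ → ℝ)) : Set (ℝ → ℝ) :=
  {f | ∃ A B : ℕ → ℝ,
    (∀ n, a ≤ A n ∧ B n ≤ b ∧ A (n+1) ≤ A n ∧ B n ≤ B (n+1)) ∧
    (⋃ n, Ioo (A n) (B n)) = Ioo a b ∧
    (∀ n, A n < B n → (Ioo (A n) (B n)).indicator f ∈ X) ∧
    (∃ L, Tendsto (fun c => denjoyIntegral c (B 0) f) (nhdsWithin a (Ioi a)) (nhds L)) ∧
    (∃ L, Tendsto (fun c => denjoyIntegral (A 0) c f) (nhdsWithin b (Iio b)) (nhds L))}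

/-- `Step(X)`: the functions given by the Step Lemma from `X`. -/
def StepSet (a b : ℝ) (X : Set (ℝ → ℝ)) : Set (ℝ → ℝ) :=
  {f | ∃ K : Set ℝ, IsClosed K ∧ K ⊆ Icc a b ∧
    ∃ c d : ℕ → ℝ, (∀ n, c n ≤ d n) ∧
      (Pairwise fun m n => Disjoint (Ioo (c m) (d m)) (Ioo (c n) (d n))) ∧
      (⋃ n, Ioo (c n) (d n)) = Ioo a b \ K ∧
      IntegrableOn f K volume ∧
      (∀ n, c n < d n → (Ioo (c n) (d n)).indicator f ∈ X) ∧
      ∃ F : ℝ → ℝ, HasDenjoyIntegralFn a b f F ∧ ACStar a b F K}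

/-- The hierarchy `Den_α[a,b]`: `Den₀ = L¹[a,b]` and
`Den_α = Step(Lim(⋃_(β<α) Den_β))` for `α > 0`. -/
def DenLevel (a b : ℝ) : Ordinal.{0} → Set (ℝ → ℝ) :=
  Ordinal.lt_wf.fix fun α ih =>
    if α = 0 then {f | IntegrableOn f (Icc a b) volume}
    else StepSet a b (LimSet a b (⋃ β : Iio α, ih β.1 β.2))

/-!
An `ACG_*` function maps null sets to null sets. If moreover its derivative vanishes almost
everywhere, then its image is null and connected, hence a point: the Denjoy primitive is unique.

If `F` is `AC_*` on a closed set `K`, then it has locally bounded variation along `K`, so locally it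
agrees on `K` with a difference of monotone functions, and `F'` is integrable on `K`. Hence
`D_f(K) ⊆ D_F(K)`, and the derivations `D_{f,F}` and `D_F` agree.

If `F` is `ACG_*` with closed pieces `Kₙ`, then by Baire every nonempty closed set has a
relatively open nonempty portion inside some `Kₙ`, so `D_F` strictly shrinks it, and a
Cantor–Bendixson argument empties the iterates at a countable stage. Conversely, the iterates up to
an empty one, cut by rational intervals, are countably many closed `AC_*` pieces.

Baire also puts `f` into the hierarchy: let `U` be the largest open set on whose compact
subintervals `f` belongs to it. Were `U` not everything, a portion of its complement would lie in
some `Kₙ`, and a step over this portion would enlarge `U`. The gaps `(c,d)` of the portion are only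
known to satisfy `(c,d) ⊆ U`; reaching their endpoints takes one more step, over an endpoint
together with a sequence converging to it along which the oscillations of `F` are summable.
-/

section Oscillation

variable {F G : ℝ → ℝ} {J : Set ℝ} {a b u v x y : ℝ}

theorem osc_le {M : ℝ} (hM : 0 ≤ M) (h : ∀ x ∈ J, ∀ y ∈ J, |F x - F y| ≤ M) : osc F J ≤ M := by
  refine Real.sSup_le ?_ hM
  rintro d ⟨x, hx, y, hy, rfl⟩
  exact h x hx y hy

theorem osc_nonneg (F : ℝ → ℝ) (J : Set ℝ) : 0 ≤ osc F J := by
  refine Real.sSup_nonneg ?_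
  rintro d ⟨x, -, y, -, rfl⟩
  exact abs_nonneg _

theorem osc_congr (h : ∀ x ∈ J, ∀ y ∈ J, F x - F y = G x - G y) : osc F J = osc G J := by
  refine congrArg sSup (Set.ext fun d => ?_)
  exact exists_congr fun x => and_congr_right fun hx => exists_congr fun y =>
    and_congr_right fun hy => by rw [h x hx y hy]

theorem osc_Icc_self (F : ℝ → ℝ) (x : ℝ) : osc F (Icc x x) = 0 := by
  refine le_antisymm (osc_le le_rfl fun y hy z hz => ?_) (osc_nonneg _ _)
  rw [Icc_self, mem_singleton_iff] at hy hz
  simp [hy, hz]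

theorem abs_sub_le_osc (hF : ContinuousOn F (Icc a b)) (h : Icc u v ⊆ Icc a b)
    (hx : x ∈ Icc u v) (hy : y ∈ Icc u v) : |F x - F y| ≤ osc F (Icc u v) := by
  obtain ⟨M, hM⟩ := isCompact_Icc.exists_bound_of_continuousOn hF
  refine le_csSup ⟨M + M, ?_⟩ ⟨x, hx, y, hy, rfl⟩
  rintro d ⟨x, hx, y, hy, rfl⟩
  exact (abs_sub _ _).trans (add_le_add (hM x (h hx)) (hM y (h hy)))

theorem osc_sub_le (hF : ContinuousOn F (Icc a b)) (hG : ContinuousOn G (Icc a b))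
    (h : Icc u v ⊆ Icc a b) :
    osc (fun x => F x - G x) (Icc u v) ≤ osc F (Icc u v) + osc G (Icc u v) := by
  refine osc_le (add_nonneg (osc_nonneg _ _) (osc_nonneg _ _)) fun x hx y hy => ?_
  calc |F x - G x - (F y - G y)| = |(F x - F y) - (G x - G y)| := by rw [sub_sub_sub_comm]
    _ ≤ |F x - F y| + |G x - G y| := abs_sub _ _
    _ ≤ osc F (Icc u v) + osc G (Icc u v) :=
        add_le_add (abs_sub_le_osc hF h hx hy) (abs_sub_le_osc hG h hx hy)

theorem osc_Icc_le_osc_uIcc_add_osc_uIcc (hF : ContinuousOn F (Icc a b)) (hx : x ∈ Icc a b)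
    (hu : u ∈ Icc a b) (hv : v ∈ Icc a b) :
    osc F (Icc u v) ≤ osc F (uIcc u x) + osc F (uIcc v x) := by
  have cover {y : ℝ} (hy : y ∈ Icc u v) : y ∈ uIcc u x ∨ y ∈ uIcc v x :=
    uIcc_comm x v ▸ uIcc_subset_uIcc_union_uIcc (Icc_subset_uIcc hy)
  have near {w y z : ℝ} (hw : w ∈ Icc a b) (hy : y ∈ uIcc w x) (hz : z ∈ uIcc w x) :
      |F y - F z| ≤ osc F (uIcc w x) := abs_sub_le_osc hF (uIcc_subset_Icc hw hx) hy hz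
  have hu0 := osc_nonneg F (uIcc u x)
  have hv0 := osc_nonneg F (uIcc v x)
  refine osc_le (add_nonneg hu0 hv0) fun y hy z hz => ?_
  have tri := abs_sub_le (F y) (F x) (F z)
  rcases cover hy with hy | hy <;> rcases cover hz with hz | hz
  · linarith [near hu hy hz]
  · linarith [near hu hy right_mem_uIcc, near hv right_mem_uIcc hz]
  · linarith [near hv hy right_mem_uIcc, near hu right_mem_uIcc hz]
  · linarith [near hv hy hz]

theorem exists_osc_le (hF : ContinuousOn F (Icc a b)) {ε : ℝ} (hε : 0 < ε) :
    ∃ δ > (0 : ℝ), ∀ u v, Icc u v ⊆ Icc a b → v - u < δ → osc F (Icc u v) ≤ ε := by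
  have hunif := isCompact_Icc.uniformContinuousOn_of_continuous hF
  obtain ⟨δ, hδ, H⟩ := Metric.uniformContinuousOn_iff.1 hunif ε hε
  refine ⟨δ, hδ, fun u v huv hlen => osc_le hε.le fun x hx y hy => (H x (huv hx) y (huv hy) ?_).le⟩
  exact (Real.dist_le_of_mem_Icc hx hy).trans_lt hlen

end Oscillation

/-- A `K`-edged pre-partition of `[a,b]` without degenerate intervals. Unlike in `IsPrePartition`,
the empty collection is allowed. -/
structure IsNondegPrePartition (a b : ℝ) (K : Set ℝ) (D : Finset (ℝ × ℝ)) : Prop where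
  lt : ∀ p ∈ D, p.1 < p.2
  left_mem : ∀ p ∈ D, p.1 ∈ K
  right_mem : ∀ p ∈ D, p.2 ∈ K
  Icc_subset : ∀ p ∈ D, Icc p.1 p.2 ⊆ Icc a b
  nonoverlapping : (D : Set (ℝ × ℝ)).Pairwise fun p q => p.2 ≤ q.1 ∨ q.2 ≤ p.1

namespace IsNondegPrePartition

variable {a b : ℝ} {K L : Set ℝ} {D E : Finset (ℝ × ℝ)}

theorem injOn_fst (hD : IsNondegPrePartition a b K D) : Set.InjOn Prod.fst (D : Set (ℝ × ℝ)) := by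
  intro p hp q hq hpq
  by_contra hne
  have := hD.lt p hp
  have := hD.lt q hq
  rcases hD.nonoverlapping hp hq hne with h | h <;> linarith

theorem injOn_snd (hD : IsNondegPrePartition a b K D) : Set.InjOn Prod.snd (D : Set (ℝ × ℝ)) := by
  intro p hp q hq hpq
  by_contra hne
  have := hD.lt p hp
  have := hD.lt q hq
  rcases hD.nonoverlapping hp hq hne with h | h <;> linarith

theorem fst_mem_Icc (hD : IsNondegPrePartition a b K D) {p : ℝ × ℝ} (hp : p ∈ D) :
    p.1 ∈ Icc a b :=
  hD.Icc_subset p hp (left_mem_Icc.2 (hD.lt p hp).le)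

theorem snd_mem_Icc (hD : IsNondegPrePartition a b K D) {p : ℝ × ℝ} (hp : p ∈ D) :
    p.2 ∈ Icc a b :=
  hD.Icc_subset p hp (right_mem_Icc.2 (hD.lt p hp).le)

theorem subset_of_endpoints_mem (hD : IsNondegPrePartition a b K D) (hED : E ⊆ D)
    (hfst : ∀ p ∈ E, p.1 ∈ L) (hsnd : ∀ p ∈ E, p.2 ∈ L) : IsNondegPrePartition a b L E where
  lt p hp := hD.lt p (hED hp)
  left_mem := hfst
  right_mem := hsnd
  Icc_subset p hp := hD.Icc_subset p (hED hp)
  nonoverlapping := hD.nonoverlapping.mono hED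

theorem sum_sub_le_of_subset (hD : IsNondegPrePartition a b K D) (hED : E ⊆ D) :
    ∑ p ∈ E, (p.2 - p.1) ≤ ∑ p ∈ D, (p.2 - p.1) :=
  Finset.sum_le_sum_of_subset_of_nonneg hED fun p hp _ => sub_nonneg.2 (hD.lt p hp).le

end IsNondegPrePartition

section ACStar

variable {a b a' b' : ℝ} {F G : ℝ → ℝ} {K L : Set ℝ}

theorem acStar_iff_nondeg : ACStar a b F K ↔ ∀ ε > (0 : ℝ), ∃ δ > (0 : ℝ), ∀ D,
    IsNondegPrePartition a b K D → ∑ p ∈ D, (p.2 - p.1) < δ →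
      ∑ p ∈ D, osc F (Icc p.1 p.2) ≤ ε := by
  refine ⟨fun h ε hε => ?_, fun h ε hε => ?_⟩
  · obtain ⟨δ, hδ, H⟩ := h ε hε
    refine ⟨δ, hδ, fun D hD hlen => ?_⟩
    rcases D.eq_empty_or_nonempty with rfl | hne
    · simpa using hε.le
    · exact (H D ⟨hne, fun p hp => ⟨(hD.lt p hp).le, hD.left_mem p hp, hD.right_mem p hp,
        hD.Icc_subset p hp⟩, hD.nonoverlapping⟩ hlen).le
  · obtain ⟨δ, hδ, H⟩ := h (ε / 2) (half_pos hε)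
    refine ⟨δ, hδ, fun D ⟨_, hD, hpair⟩ hlen => ?_⟩
    have hosc : ∑ p ∈ D with p.1 < p.2, osc F (Icc p.1 p.2) = ∑ p ∈ D, osc F (Icc p.1 p.2) := by
      refine Finset.sum_filter_of_ne fun p hp hne => (hD p hp).1.lt_of_ne fun heq => hne ?_
      rw [heq, osc_Icc_self]
    have hsum : ∑ p ∈ D with p.1 < p.2, (p.2 - p.1) ≤ ∑ p ∈ D, (p.2 - p.1) :=
      Finset.sum_le_sum_of_subset_of_nonneg (Finset.filter_subset _ _)
        fun p hp _ => sub_nonneg.2 (hD p hp).1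
    have hnondeg : IsNondegPrePartition a b K {p ∈ D | p.1 < p.2} := by
      constructor
      · exact fun p hp => (Finset.mem_filter.1 hp).2
      · exact fun p hp => (hD p (Finset.mem_filter.1 hp).1).2.1
      · exact fun p hp => (hD p (Finset.mem_filter.1 hp).1).2.2.1
      · exact fun p hp => (hD p (Finset.mem_filter.1 hp).1).2.2.2
      · exact hpair.mono (Finset.filter_subset _ _)
    rw [← hosc]
    exact (H _ hnondeg (hsum.trans_lt hlen)).trans_lt (half_lt_self hε)

theorem ACStar.transfer (hKL : K ⊆ L) (h : ∀ u ∈ K, ∀ v ∈ K, u ≤ v → Icc u v ⊆ Icc a' b' →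
    Icc u v ⊆ Icc a b ∧ osc G (Icc u v) ≤ osc F (Icc u v)) (hF : ACStar a b F L) :
    ACStar a' b' G K := by
  intro ε hε
  obtain ⟨δ, hδ, H⟩ := hF ε hε
  refine ⟨δ, hδ, fun D ⟨hne, hD, hpair⟩ hlen => ?_⟩
  have hcmp (p) (hp : p ∈ D) := h p.1 (hD p hp).2.1 p.2 (hD p hp).2.2.1 (hD p hp).1 (hD p hp).2.2.2
  refine (Finset.sum_le_sum fun p hp => (hcmp p hp).2).trans_lt
    (H D ⟨hne, fun p hp => ?_, hpair⟩ hlen)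
  exact ⟨(hD p hp).1, hKL (hD p hp).2.1, hKL (hD p hp).2.2.1, (hcmp p hp).1⟩

theorem ACStar.mono (hKL : K ⊆ L) (hF : ACStar a b F L) : ACStar a b F K :=
  hF.transfer hKL fun _ _ _ _ _ h => ⟨h, le_rfl⟩

theorem ACStar.of_subsingleton (hK : K.Subsingleton) : ACStar a b F K := by
  refine acStar_iff_nondeg.2 fun ε hε => ⟨1, one_pos, fun D hD _ => ?_⟩
  refine (Finset.sum_nonpos fun p hp => ?_).trans hε.le
  exact absurd (hK (hD.left_mem p hp) (hD.right_mem p hp)) (hD.lt p hp).ne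

theorem ACStar.sub (hFc : ContinuousOn F (Icc a b)) (hGc : ContinuousOn G (Icc a b))
    (hF : ACStar a b F K) (hG : ACStar a b G K) : ACStar a b (fun x => F x - G x) K := by
  intro ε hε
  obtain ⟨δ, hδ, H⟩ := hF (ε / 2) (half_pos hε)
  obtain ⟨δ', hδ', H'⟩ := hG (ε / 2) (half_pos hε)
  refine ⟨min δ δ', lt_min hδ hδ', fun D hD hlen => ?_⟩
  calc ∑ p ∈ D, osc (fun x => F x - G x) (Icc p.1 p.2)
      ≤ ∑ p ∈ D, osc F (Icc p.1 p.2) + ∑ p ∈ D, osc G (Icc p.1 p.2) := by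
        rw [← Finset.sum_add_distrib]
        exact Finset.sum_le_sum fun p hp => osc_sub_le hFc hGc (hD.2.1 p hp).2.2.2
    _ < ε / 2 + ε / 2 := add_lt_add (H D hD (hlen.trans_le (min_le_left _ _)))
        (H' D hD (hlen.trans_le (min_le_right _ _)))
    _ = ε := add_halves ε

theorem ACStar.exists_sum_osc_le (hF : ACStar a b F K) {ε : ℝ} (hε : 0 < ε) :
    ∃ δ > (0 : ℝ), ∀ (ι : Type) (s : Finset ι) (u v : ι → ℝ), (∀ i ∈ s, u i ≤ v i) →
      (∀ i ∈ s, u i ∈ K) → (∀ i ∈ s, v i ∈ K) → (∀ i ∈ s, Icc (u i) (v i) ⊆ Icc a b) →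
      ((s : Set ι).Pairwise fun i j => v i ≤ u j ∨ v j ≤ u i) →
      ∑ i ∈ s, (v i - u i) < δ → ∑ i ∈ s, osc F (Icc (u i) (v i)) ≤ ε := by
  obtain ⟨δ, hδ, H⟩ := acStar_iff_nondeg.1 hF ε hε
  refine ⟨δ, hδ, fun ι s u v huv hu hv hsub hpair hlen => ?_⟩
  set t := {i ∈ s | u i < v i}
  have hts : t ⊆ s := Finset.filter_subset _ _
  have hlt {i} (hi : i ∈ t) : u i < v i := (Finset.mem_filter.1 hi).2
  have hinj : Set.InjOn (fun i => (u i, v i)) (t : Set ι) := by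
    intro i hi j hj hij
    obtain ⟨hu', hv'⟩ := Prod.mk.inj hij
    by_contra hne
    have := hlt hi
    rcases hpair (hts hi) (hts hj) hne with h | h <;> linarith
  have hD : IsNondegPrePartition a b K (t.image fun i => (u i, v i)) := by
    constructor
    · exact Finset.forall_mem_image.2 fun i hi => hlt hi
    · exact Finset.forall_mem_image.2 fun i hi => hu i (hts hi)
    · exact Finset.forall_mem_image.2 fun i hi => hv i (hts hi)
    · exact Finset.forall_mem_image.2 fun i hi => hsub i (hts hi)
    · rw [Finset.coe_image, hinj.pairwise_image]
      exact hpair.mono hts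
  have hosc : ∑ i ∈ t, osc F (Icc (u i) (v i)) = ∑ i ∈ s, osc F (Icc (u i) (v i)) := by
    refine Finset.sum_filter_of_ne fun i hi hne => (huv i hi).lt_of_ne fun heq => hne ?_
    rw [heq, osc_Icc_self]
  have hlen' : ∑ i ∈ t, (v i - u i) ≤ ∑ i ∈ s, (v i - u i) :=
    Finset.sum_le_sum_of_subset_of_nonneg hts fun i hi _ => sub_nonneg.2 (huv i hi)
  have := H _ hD
  rw [Finset.sum_image hinj, Finset.sum_image hinj, hosc] at this
  exact this (hlen'.trans_lt hlen)

theorem sum_filter_mem_le_card_mul {ι : Type*} {D : Finset ι} {e : ι → ℝ}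
    (he : Set.InjOn e (D : Set ι)) (S : Finset ℝ) {g : ι → ℝ} {η : ℝ} (hη : 0 ≤ η)
    (hg : ∀ i ∈ D, g i ≤ η) : ∑ i ∈ D with e i ∈ S, g i ≤ S.card * η := by
  have hcard : {i ∈ D | e i ∈ S}.card ≤ S.card := Finset.card_le_card_of_injOn e
    (fun i hi => (Finset.mem_filter.1 hi).2) (he.mono (Finset.filter_subset _ _))
  calc ∑ i ∈ D with e i ∈ S, g i
      ≤ {i ∈ D | e i ∈ S}.card • η :=
        Finset.sum_le_card_nsmul _ _ _ fun i hi => hg i (Finset.mem_filter.1 hi).1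
    _ ≤ S.card * η := by rw [nsmul_eq_mul]; gcongr

-- By uniform continuity, the at most `2 |S|` short intervals with an endpoint in `S` carry little
-- oscillation.
theorem ACStar.of_sdiff_finset (hFc : ContinuousOn F (Icc a b)) (h : ∀ ε > (0 : ℝ),
    ∃ S : Finset ℝ, ∃ δ > (0 : ℝ), ∀ D, IsNondegPrePartition a b (K \ S) D →
      ∑ p ∈ D, (p.2 - p.1) < δ → ∑ p ∈ D, osc F (Icc p.1 p.2) ≤ ε) : ACStar a b F K := by
  refine acStar_iff_nondeg.2 fun ε hε => ?_
  obtain ⟨S, δ, hδ, H⟩ := h (ε / 2) (half_pos hε)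
  set η := ε / 4 / (S.card + 1) with hη_def
  have hη : 0 < η := by positivity
  obtain ⟨δ', hδ', hsmall⟩ := exists_osc_le hFc hη
  refine ⟨min δ δ', lt_min hδ hδ', fun D hD hlen => ?_⟩
  have hshort : ∀ p ∈ D, osc F (Icc p.1 p.2) ≤ η := fun p hp =>
    hsmall _ _ (hD.Icc_subset p hp) <| (Finset.single_le_sum
      (fun p hp => sub_nonneg.2 (hD.lt p hp).le) hp).trans_lt (hlen.trans_le (min_le_right _ _))
  have hcard : S.card * η ≤ ε / 4 := by
    rw [hη_def, mul_div_left_comm]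
    exact mul_le_of_le_one_right (by positivity)
      (div_le_one_of_le₀ (lt_add_one _).le (by positivity))
  have avoids_S : ∑ p ∈ D with ¬(p.1 ∈ S ∨ p.2 ∈ S), osc F (Icc p.1 p.2) ≤ ε / 2 := by
    have hsub := Finset.filter_subset (fun p => ¬(p.1 ∈ S ∨ p.2 ∈ S)) D
    refine H _ (hD.subset_of_endpoints_mem hsub ?_ ?_)
      ((hD.sum_sub_le_of_subset hsub).trans_lt (hlen.trans_le (min_le_left _ _)))
    · exact fun p hp => ⟨hD.left_mem p (hsub hp), fun hS => (Finset.mem_filter.1 hp).2 (.inl hS)⟩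
    · exact fun p hp => ⟨hD.right_mem p (hsub hp), fun hS => (Finset.mem_filter.1 hp).2 (.inr hS)⟩
  have meets_S : ∑ p ∈ D with p.1 ∈ S ∨ p.2 ∈ S, osc F (Icc p.1 p.2) ≤ S.card * η + S.card * η := by
    rw [Finset.filter_or]
    refine le_trans ?_ (add_le_add (sum_filter_mem_le_card_mul hD.injOn_fst S hη.le hshort)
      (sum_filter_mem_le_card_mul hD.injOn_snd S hη.le hshort))
    rw [← Finset.sum_union_inter]
    exact le_add_of_nonneg_right (Finset.sum_nonneg fun p _ => osc_nonneg _ _)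
  rw [← Finset.sum_filter_add_sum_filter_not D fun p => p.1 ∈ S ∨ p.2 ∈ S]
  linarith

protected theorem ACStar.insert (hFc : ContinuousOn F (Icc a b)) (hF : ACStar a b F K) (e : ℝ) :
    ACStar a b F (insert e K) := by
  refine ACStar.of_sdiff_finset hFc fun ε hε => ⟨{e}, acStar_iff_nondeg.1 (hF.mono ?_) ε hε⟩
  rw [Finset.coe_singleton, sdiff_singleton_subset_iff]

theorem ACStar.insert_of_summable_osc (hFc : ContinuousOn F (Icc a b)) {l : ℝ} (hl : l ∈ Icc a b)
    {E : Set ℝ} (hE : Summable fun x : E => osc F (uIcc x l)) : ACStar a b F (insert l E) := by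
  refine ACStar.insert hFc (ACStar.of_sdiff_finset hFc fun ε hε => ?_) l
  set ω : ℝ → ℝ := E.indicator fun x => osc F (uIcc x l)
  have hω : Summable ω := summable_subtype_iff_indicator.1 hE
  obtain ⟨S, hS⟩ := summable_iff_vanishing_norm.1 hω (ε / 2) (half_pos hε)
  refine ⟨S, 1, one_pos, fun D hD _ => ?_⟩
  have tail (e : ℝ × ℝ → ℝ) (he : Set.InjOn e (D : Set (ℝ × ℝ))) (heS : ∀ p ∈ D, e p ∈ E \ S) :
      ∑ p ∈ D, osc F (uIcc (e p) l) ≤ ε / 2 := by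
    have hdisj : Disjoint (D.image e) S :=
      Finset.disjoint_left.2 <| Finset.forall_mem_image.2 fun p hp => (heS p hp).2
    calc ∑ p ∈ D, osc F (uIcc (e p) l) = ∑ p ∈ D, ω (e p) :=
          Finset.sum_congr rfl fun p hp =>
            (indicator_of_mem (heS p hp).1 fun x => osc F (uIcc x l)).symm
      _ = ∑ x ∈ D.image e, ω x := (Finset.sum_image he).symm
      _ ≤ ε / 2 := (le_abs_self _).trans (hS _ hdisj).le
  calc ∑ p ∈ D, osc F (Icc p.1 p.2)
      ≤ ∑ p ∈ D, osc F (uIcc p.1 l) + ∑ p ∈ D, osc F (uIcc p.2 l) := by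
        rw [← Finset.sum_add_distrib]
        exact Finset.sum_le_sum fun p hp =>
          osc_Icc_le_osc_uIcc_add_osc_uIcc hFc hl (hD.fst_mem_Icc hp) (hD.snd_mem_Icc hp)
    _ ≤ ε / 2 + ε / 2 :=
        add_le_add (tail _ hD.injOn_fst hD.left_mem) (tail _ hD.injOn_snd hD.right_mem)
    _ = ε := add_halves ε

theorem ACGStar.iUnion {ι : Type*} [Countable ι] {C : ι → Set ℝ} (hclosed : ∀ i, IsClosed (C i))
    (hsub : ∀ i, C i ⊆ Icc a b) (hF : ∀ i, ACStar a b F (C i)) : ACGStar a b F (⋃ i, C i) := by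
  rcases isEmpty_or_nonempty ι with hι | hι
  · exact ⟨fun _ => ∅, fun _ => ⟨isClosed_empty, empty_subset _,
      .of_subsingleton subsingleton_empty⟩, by simp⟩
  · obtain ⟨e, he⟩ := exists_surjective_nat ι
    exact ⟨C ∘ e, fun n => ⟨hclosed _, hsub _, hF _⟩, (he.iUnion_comp C).symm⟩

theorem ACStar.acgStar (hF : ACStar a b F K) (hclosed : IsClosed K) (hsub : K ⊆ Icc a b) :
    ACGStar a b F K :=
  ⟨fun _ => K, fun _ => ⟨hclosed, hsub, hF⟩, (iUnion_const K).symm⟩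

theorem ACGStar.union (hK : ACGStar a b F K) (hL : ACGStar a b F L) :
    ACGStar a b F (K ∪ L) := by
  obtain ⟨C, hC, rfl⟩ := hK
  obtain ⟨E, hE, rfl⟩ := hL
  rw [← iUnion_sumElim C E]
  exact .iUnion (Sum.rec (fun n => (hC n).1) fun n => (hE n).1)
    (Sum.rec (fun n => (hC n).2.1) fun n => (hE n).2.1)
    (Sum.rec (fun n => (hC n).2.2) fun n => (hE n).2.2)

theorem ACGStar.inter_Icc_of_sub_eq {c d : ℝ} (hF : ACGStar a b F K) (hcd : Icc c d ⊆ Icc a b)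
    (hcd' : Icc c d ⊆ Icc a' b') (hG : ∀ x ∈ Icc c d, ∀ y ∈ Icc c d, G x - G y = F x - F y) :
    ACGStar a' b' G (K ∩ Icc c d) := by
  obtain ⟨C, hC, rfl⟩ := hF
  rw [iUnion_inter]
  refine .iUnion (fun n => (hC n).1.inter isClosed_Icc) (fun n => inter_subset_right.trans hcd')
    fun n => (hC n).2.2.transfer inter_subset_left fun u hu v hv _ _ => ?_
  have huv : Icc u v ⊆ Icc c d := Icc_subset_Icc hu.2.1 hv.2.2
  exact ⟨huv.trans hcd, (osc_congr fun x hx y hy => hG x (huv hx) y (huv hy)).le⟩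

theorem ACGStar.sub (hFc : ContinuousOn F (Icc a b)) (hGc : ContinuousOn G (Icc a b))
    (hF : ACGStar a b F K) (hG : ACGStar a b G K) : ACGStar a b (fun x => F x - G x) K := by
  obtain ⟨C, hC, hCK⟩ := hF
  obtain ⟨E, hE, hEK⟩ := hG
  have hK : K = ⋃ i : ℕ × ℕ, C i.1 ∩ E i.2 := by
    rw [iUnion_prod']
    simp only [← inter_iUnion, ← iUnion_inter, ← hCK, ← hEK, inter_self]
  rw [hK]
  exact .iUnion (fun i => (hC i.1).1.inter (hE i.2).1)
    (fun i => inter_subset_left.trans (hC i.1).2.1) fun i =>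
    ((hC i.1).2.2.mono inter_subset_left).sub hFc hGc ((hE i.2).2.2.mono inter_subset_right)

end ACStar

theorem eq_Ioo_of_isOpen_of_isPreconnected {A : Set ℝ} (hopen : IsOpen A)
    (hconn : IsPreconnected A) (hbdd : Bornology.IsBounded A) : A = Ioo (sInf A) (sSup A) := by
  rcases A.eq_empty_or_nonempty with rfl | hne
  · simp
  refine Subset.antisymm ?_
    (IsConnected.Ioo_csInf_csSup_subset ⟨hne, hconn⟩ hbdd.bddBelow hbdd.bddAbove)
  have := interior_mono (subset_Icc_csInf_csSup hbdd.bddBelow hbdd.bddAbove)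
  rwa [interior_Icc, hopen.interior_eq] at this

theorem exists_iUnion_disjoint_Ioo_eq {U : Set ℝ} (hopen : IsOpen U)
    (hbdd : Bornology.IsBounded U) :
    ∃ c d : ℕ → ℝ, (∀ n, c n ≤ d n) ∧
      (Pairwise fun m n => Disjoint (Ioo (c m) (d m)) (Ioo (c n) (d n))) ∧
      ⋃ n, Ioo (c n) (d n) = U := by
  set S : Set (Set ℝ) := connectedComponentIn U '' U
  have hdisj : S.PairwiseDisjoint id := by
    rintro _ ⟨x, -, rfl⟩ _ ⟨y, -, rfl⟩ hne
    refine disjoint_left.2 fun z hzx hzy => hne ?_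
    rw [connectedComponentIn_eq hzx, connectedComponentIn_eq hzy]
  have hcount : S.Countable := hdisj.countable_of_isOpen
    (by rintro _ ⟨x, -, rfl⟩; exact hopen.connectedComponentIn)
    (by rintro _ ⟨x, hx, rfl⟩; exact ⟨x, mem_connectedComponentIn hx⟩)
  have : Encodable S := hcount.toEncodable
  have hIoo (A : S) : ∃ c d : ℝ, c ≤ d ∧ (A : Set ℝ) = Ioo c d := by
    obtain ⟨_, x, -, rfl⟩ := A
    have hA := hbdd.subset (connectedComponentIn_subset U x)
    exact ⟨_, _, Real.sInf_le_sSup _ hA.bddBelow hA.bddAbove,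
      eq_Ioo_of_isOpen_of_isPreconnected hopen.connectedComponentIn
        isPreconnected_connectedComponentIn hA⟩
  have hdecode (n : ℕ) : ∃ c d : ℝ, c ≤ d ∧ ⋃ A ∈ Encodable.decode₂ S n, (A : Set ℝ) = Ioo c d :=
    Encodable.iUnion_decode₂_cases (C := fun B => ∃ c d : ℝ, c ≤ d ∧ B = Ioo c d)
      ⟨0, 0, le_rfl, by simp⟩ hIoo
  choose c d hcd heq using hdecode
  refine ⟨c, d, hcd, fun m n hmn => ?_, ?_⟩
  · simp only [← heq]
    exact Encodable.iUnion_decode₂_disjoint_on (f := fun A : S => (A : Set ℝ)) (fun A B hAB =>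
      hdisj A.2 B.2 (Subtype.coe_ne_coe.2 hAB)) hmn
  · simp only [← heq]
    rw [Encodable.iUnion_decode₂, ← sUnion_eq_iUnion]
    refine Subset.antisymm (sUnion_subset ?_) fun x hx => ?_
    · rintro _ ⟨x, -, rfl⟩
      exact connectedComponentIn_subset U x
    · exact ⟨_, ⟨x, hx, rfl⟩, mem_connectedComponentIn hx⟩

section NullImages

variable {a b : ℝ} {F G : ℝ → ℝ} {K E : Set ℝ}

theorem exists_volume_image_le_two_mul (hne : E.Nonempty) (hbdd : Bornology.IsBounded (F '' E)) :
    ∃ u ∈ E, ∃ v ∈ E, u ≤ v ∧ volume (F '' E) ≤ 2 * ENNReal.ofReal |F u - F v| := by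
  obtain ⟨x, hx, y, hy, hxy⟩ : ∃ x ∈ E, ∃ y ∈ E, Metric.ediam (F '' E) / 2 ≤ edist (F x) (F y) := by
    by_contra! hlt
    have hle : Metric.ediam (F '' E) ≤ Metric.ediam (F '' E) / 2 :=
      Metric.ediam_image_le_iff.2 fun x hx y hy => (hlt x hx y hy).le
    obtain ⟨x, hx⟩ := hne
    have hpos : Metric.ediam (F '' E) ≠ 0 := by
      intro h0
      simpa [h0] using hlt x hx x hx
    exact (ENNReal.half_lt_self hpos hbdd.ediam_ne_top).not_ge hle
  have hvol : volume (F '' E) ≤ 2 * ENNReal.ofReal |F x - F y| := by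
    rw [edist_dist, Real.dist_eq] at hxy
    rw [mul_comm]
    exact (Real.volume_le_diam _).trans ((ENNReal.div_le_iff_le_mul (by simp) (by simp)).1 hxy)
  rcases le_total x y with h | h
  · exact ⟨x, hx, y, hy, h, hvol⟩
  · exact ⟨y, hy, x, hx, h, abs_sub_comm (F x) (F y) ▸ hvol⟩

theorem sum_sub_lt_of_pairwiseDisjoint_Icc {ι : Type*} {s : Finset ι} {u v : ι → ℝ} {U : Set ℝ}
    {δ : ℝ} (hδ : 0 < δ) (huv : ∀ i ∈ s, u i ≤ v i)
    (hdisj : (s : Set ι).PairwiseDisjoint fun i => Icc (u i) (v i))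
    (hsub : ∀ i ∈ s, Icc (u i) (v i) ⊆ U) (hU : volume U < ENNReal.ofReal δ) :
    ∑ i ∈ s, (v i - u i) < δ := by
  rw [← ENNReal.ofReal_lt_ofReal_iff hδ,
    ENNReal.ofReal_sum_of_nonneg fun i hi => sub_nonneg.2 (huv i hi)]
  calc ∑ i ∈ s, ENNReal.ofReal (v i - u i) = volume (⋃ i ∈ s, Icc (u i) (v i)) := by
        simp only [measure_biUnion_finset hdisj fun _ _ => measurableSet_Icc, Real.volume_Icc]
    _ ≤ volume U := measure_mono (iUnion₂_subset hsub)
    _ < ENNReal.ofReal δ := hU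

theorem le_or_le_of_disjoint_Icc {u v u' v' : ℝ} (huv : u ≤ v) (huv' : u' ≤ v')
    (h : Disjoint (Icc u v) (Icc u' v')) : v ≤ u' ∨ v' ≤ u := by
  by_contra! hlt
  exact disjoint_left.1 h ⟨le_max_left u u', max_le huv hlt.1.le⟩
    ⟨le_max_right u u', max_le hlt.2.le huv'⟩

theorem exists_disjoint_Icc_volume_image_le (hbdd : Bornology.IsBounded E)
    (hFbdd : Bornology.IsBounded (F '' E)) {U : Set ℝ} (hU : IsOpen U) (hEU : E ⊆ U) :
    ∃ (I : Set ℕ) (u v : I → ℝ), (∀ n, u n ∈ E) ∧ (∀ n, v n ∈ E) ∧ (∀ n, u n ≤ v n) ∧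
      (∀ n, Icc (u n) (v n) ⊆ U) ∧
      (Pairwise fun m n => Disjoint (Icc (u m) (v m)) (Icc (u n) (v n))) ∧
      volume (F '' E) ≤ 2 * ∑' n, ENNReal.ofReal |F (u n) - F (v n)| := by
  obtain ⟨R, hR⟩ := hbdd.subset_ball 0
  obtain ⟨c, d, -, hdisj, hcover⟩ := exists_iUnion_disjoint_Ioo_eq
    (hU.inter (Metric.isOpen_ball (x := 0) (ε := R)))
    (Metric.isBounded_ball.subset inter_subset_right)
  set I := {n | (E ∩ Ioo (c n) (d n)).Nonempty}
  choose u hu v hv huv hvol using fun n : I =>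
    exists_volume_image_le_two_mul n.2 (hFbdd.subset (image_mono inter_subset_left))
  have hIoo (n : I) : Icc (u n) (v n) ⊆ Ioo (c n) (d n) := Icc_subset_Ioo (hu n).2.1 (hv n).2.2
  have hIU (n : I) : Icc (u n) (v n) ⊆ U :=
    (hIoo n).trans ((subset_iUnion (fun n => Ioo (c n) (d n)) n).trans
      (hcover.subset.trans inter_subset_left))
  have hEcover : F '' E ⊆ ⋃ n : I, F '' (E ∩ Ioo (c n) (d n)) := by
    rintro _ ⟨x, hx, rfl⟩
    have hxU : x ∈ ⋃ n, Ioo (c n) (d n) := hcover ▸ ⟨hEU hx, hR hx⟩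
    obtain ⟨n, hn⟩ := mem_iUnion.1 hxU
    exact mem_iUnion.2 ⟨⟨n, x, hx, hn⟩, x, ⟨hx, hn⟩, rfl⟩
  refine ⟨I, u, v, fun n => (hu n).1, fun n => (hv n).1, huv, hIU,
    fun m n hmn => (hdisj (Subtype.coe_ne_coe.2 hmn)).mono (hIoo m) (hIoo n), ?_⟩
  calc volume (F '' E) ≤ ∑' n : I, volume (F '' (E ∩ Ioo (c n) (d n))) :=
        (measure_mono hEcover).trans (measure_iUnion_le _)
    _ ≤ ∑' n : I, 2 * ENNReal.ofReal |F (u n) - F (v n)| := ENNReal.tsum_le_tsum hvol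
    _ = 2 * ∑' n : I, ENNReal.ofReal |F (u n) - F (v n)| := ENNReal.tsum_mul_left

theorem ACStar.volume_image_le (hFc : ContinuousOn F (Icc a b)) (hF : ACStar a b F K)
    (hEK : E ⊆ K) (hE : E ⊆ Icc a b) (hE0 : volume E = 0) {ε : ℝ} (hε : 0 < ε) :
    volume (F '' E) ≤ 2 * ENNReal.ofReal ε := by
  obtain ⟨δ, hδ, H⟩ := hF.exists_sum_osc_le hε
  obtain ⟨U, hEU, hUo, hUδ⟩ := E.exists_isOpen_lt_of_lt (ENNReal.ofReal δ)
    (by rw [hE0]; exact ENNReal.ofReal_pos.2 hδ)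
  obtain ⟨I, u, v, hu, hv, huv, hIU, hdisj, hvol⟩ := exists_disjoint_Icc_volume_image_le
    ((Metric.isBounded_Icc a b).subset hE)
    ((isCompact_Icc.image_of_continuousOn hFc).isBounded.subset (image_mono hE)) hUo hEU
  have hIcc (n : I) : Icc (u n) (v n) ⊆ Icc a b := Icc_subset_Icc (hE (hu n)).1 (hE (hv n)).2
  refine hvol.trans ?_
  gcongr
  refine ENNReal.summable.tsum_le_of_sum_le fun s => ?_
  rw [← ENNReal.ofReal_sum_of_nonneg fun _ _ => abs_nonneg _]
  refine ENNReal.ofReal_le_ofReal ?_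
  calc ∑ n ∈ s, |F (u n) - F (v n)| ≤ ∑ n ∈ s, osc F (Icc (u n) (v n)) :=
        Finset.sum_le_sum fun n _ => abs_sub_le_osc hFc (hIcc n) (left_mem_Icc.2 (huv n))
          (right_mem_Icc.2 (huv n))
    _ ≤ ε := by
        refine H I s u v (fun n _ => huv n) (fun n _ => hEK (hu n)) (fun n _ => hEK (hv n))
          (fun n _ => hIcc n) (fun m _ n _ hmn => ?_) ?_
        · exact le_or_le_of_disjoint_Icc (huv m) (huv n) (hdisj hmn)
        · exact sum_sub_lt_of_pairwiseDisjoint_Icc hδ (fun n _ => huv n) (hdisj.set_pairwise _)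
            (fun n _ => hIU n) hUδ

theorem ACStar.volume_image_eq_zero (hFc : ContinuousOn F (Icc a b)) (hF : ACStar a b F K)
    (hEK : E ⊆ K) (hE : E ⊆ Icc a b) (hE0 : volume E = 0) : volume (F '' E) = 0 := by
  refine le_antisymm (ENNReal.le_of_forall_pos_le_add fun ε hε _ => ?_) zero_le
  have hε2 : (0 : ℝ) < ε / 2 := by positivity
  refine (hF.volume_image_le hFc hEK hE hE0 hε2).trans_eq ?_
  rw [zero_add, ← ENNReal.ofReal_ofNat, ← ENNReal.ofReal_mul zero_le_two,
    mul_div_cancel₀ _ two_ne_zero, ENNReal.ofReal_coe_nnreal]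

theorem volume_image_eq_zero_of_hasDerivAt_zero (hF : ∀ x ∈ E, HasDerivAt F 0 x) :
    volume (F '' E) = 0 := by
  refine addHaar_image_eq_zero_of_det_fderivWithin_eq_zero volume (f' := fun _ => 0)
    (fun x hx => ?_) (fun _ _ => by simp [ContinuousLinearMap.det])
  simpa using (hF x hx).hasFDerivAt.hasFDerivWithinAt (s := E)

theorem ACGStar.volume_image_eq_zero (hFc : ContinuousOn F (Icc a b))
    (hF : ACGStar a b F (Icc a b)) (hder : ∀ᵐ x ∂volume.restrict (Icc a b), HasDerivAt F 0 x) :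
    volume (F '' Icc a b) = 0 := by
  obtain ⟨C, hC, hCU⟩ := hF
  set N : Set ℝ := {x ∈ Icc a b | ¬ HasDerivAt F 0 x}
  have hN0 : volume N = 0 := by
    rw [ae_restrict_iff' measurableSet_Icc, ae_iff] at hder
    simpa only [Classical.not_imp] using hder
  have hcover : Icc a b ⊆ {x | HasDerivAt F 0 x} ∪ ⋃ n, N ∩ C n := by
    rw [← inter_iUnion, ← hCU]
    exact fun x hx => or_iff_not_imp_left.2 fun hxN => ⟨⟨hx, hxN⟩, hx⟩
  refine measure_mono_null (image_mono hcover) ?_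
  rw [image_union, image_iUnion]
  refine measure_union_null (volume_image_eq_zero_of_hasDerivAt_zero fun _ hx => hx)
    (measure_iUnion_null fun n => ?_)
  exact (hC n).2.2.volume_image_eq_zero hFc inter_subset_right (fun _ hx => hx.1.1)
    (measure_mono_null inter_subset_left hN0)

theorem eq_left_of_volume_image_eq_zero (hFc : ContinuousOn F (Icc a b))
    (h0 : volume (F '' Icc a b) = 0) {x : ℝ} (hx : x ∈ Icc a b) : F x = F a := by
  have hsub : uIcc (F a) (F x) ⊆ F '' Icc a b :=
    (isPreconnected_Icc.image F hFc).ordConnected.uIcc_subset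
      (mem_image_of_mem F (left_mem_Icc.2 (hx.1.trans hx.2))) (mem_image_of_mem F hx)
  have := measure_mono_null hsub h0
  rw [Real.volume_interval, ENNReal.ofReal_eq_zero, abs_nonpos_iff] at this
  exact sub_eq_zero.1 this

end NullImages

theorem ae_restrict_Icc_of_ae_Ioo {a b : ℝ} {p : ℝ → Prop}
    (h : ∀ᵐ x ∂volume.restrict (Icc a b), x ∈ Ioo a b → p x) :
    ∀ᵐ x ∂volume.restrict (Icc a b), p x := by
  rw [← restrict_Ioo_eq_restrict_Icc] at h ⊢
  filter_upwards [h, ae_restrict_mem measurableSet_Ioo] with x hx hmem using hx hmem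

section DenjoyIntegral

open scoped Topology

variable {a b c d : ℝ} {f F G : ℝ → ℝ}

theorem HasDenjoyIntegralFn.restrict (h : HasDenjoyIntegralFn a b f F) (hac : a ≤ c) (hcd : c ≤ d)
    (hdb : d ≤ b) (hG : ∀ x ∈ Icc c d, G x = F x - F c) : HasDenjoyIntegralFn c d f G := by
  obtain ⟨hFc, -, hFacg, hder⟩ := h
  have hsub : Icc c d ⊆ Icc a b := Icc_subset_Icc hac hdb
  refine ⟨((hFc.mono hsub).sub continuousOn_const).congr hG, ?_, ?_, ae_restrict_Icc_of_ae_Ioo ?_⟩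
  · rw [hG c (left_mem_Icc.2 hcd), sub_self]
  · rw [← inter_eq_right.2 hsub]
    exact hFacg.inter_Icc_of_sub_eq hsub Subset.rfl fun x hx y hy => by
      rw [hG x hx, hG y hy, sub_sub_sub_cancel_right]
  · filter_upwards [ae_restrict_of_ae_restrict_of_subset hsub hder] with x hx hmem
    refine (hx.sub_const (F c)).congr_of_eventuallyEq ?_
    filter_upwards [Icc_mem_nhds hmem.1 hmem.2] using hG

theorem HasDenjoyIntegralFn.congr (h : HasDenjoyIntegralFn a b f F) (hab : a ≤ b)
    (hFG : ∀ x ∈ Icc a b, G x = F x) : HasDenjoyIntegralFn a b f G :=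
  h.restrict le_rfl hab le_rfl fun x hx => by rw [hFG x hx, h.2.1, sub_zero]

theorem HasDenjoyIntegralFn.unique (hF : HasDenjoyIntegralFn a b f F)
    (hG : HasDenjoyIntegralFn a b f G) {x : ℝ} (hx : x ∈ Icc a b) : F x = G x := by
  obtain ⟨hFc, hFa, hFacg, hFder⟩ := hF
  obtain ⟨hGc, hGa, hGacg, hGder⟩ := hG
  have hder : ∀ᵐ x ∂volume.restrict (Icc a b), HasDerivAt (fun x => F x - G x) 0 x := by
    filter_upwards [hFder, hGder] with x hFx hGx
    simpa using hFx.fun_sub hGx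
  have := eq_left_of_volume_image_eq_zero (hFc.sub hGc)
    ((hFacg.sub hFc hGc hGacg).volume_image_eq_zero (hFc.sub hGc) hder) hx
  simpa [hFa, hGa, sub_eq_zero] using this

theorem HasDenjoyIntegralFn.denjoyIntegral_eq (h : HasDenjoyIntegralFn a b f F) (hac : a ≤ c)
    (hcd : c ≤ d) (hdb : d ≤ b) : denjoyIntegral c d f = F d - F c := by
  have hres : HasDenjoyIntegralFn c d f fun x => F x - F c :=
    h.restrict hac hcd hdb fun _ _ => rfl
  have hint : DenjoyIntegrable c d f := ⟨_, hres⟩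
  rw [denjoyIntegral, dif_pos hint]
  exact (Classical.choose_spec hint).unique hres (right_mem_Icc.2 hcd)

theorem denjoyIntegrable_and_eq_denjoyIntegral_iff (hab : a ≤ b) :
    (DenjoyIntegrable a b f ∧ ∀ x ∈ Icc a b, F x = denjoyIntegral a x f) ↔
      HasDenjoyIntegralFn a b f F := by
  refine ⟨fun ⟨⟨G, hG⟩, hF⟩ => hG.congr hab fun x hx => ?_, fun h => ⟨⟨F, h⟩, fun x hx => ?_⟩⟩
  · rw [hF x hx, hG.denjoyIntegral_eq le_rfl hx.1 hx.2, hG.2.1, sub_zero]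
  · rw [h.denjoyIntegral_eq le_rfl hx.1 hx.2, h.2.1, sub_zero]

/-- The primitive of `f` cut off to `(c,d)`, when `F` is a primitive of `f`: the increment of `F`
from `c` to the point of `[c,d]` nearest to `x`. -/
def cutoffPrimitive (F : ℝ → ℝ) (c d x : ℝ) : ℝ := F (max c (min x d)) - F c

theorem cutoffPrimitive_of_mem_Icc {x : ℝ} (hx : x ∈ Icc c d) :
    cutoffPrimitive F c d x = F x - F c := by
  rw [cutoffPrimitive, min_eq_left hx.2, max_eq_right hx.1]

theorem cutoffPrimitive_of_le {x : ℝ} (hcd : c ≤ d) (hx : x ≤ c) :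
    cutoffPrimitive F c d x = 0 := by
  rw [cutoffPrimitive, min_eq_left (hx.trans hcd), max_eq_left hx, sub_self]

theorem cutoffPrimitive_of_ge {x : ℝ} (hcd : c ≤ d) (hx : d ≤ x) :
    cutoffPrimitive F c d x = F d - F c := by
  rw [cutoffPrimitive, min_eq_right hx, max_eq_right hcd]

theorem ACGStar.of_eqOn_const {k : ℝ} (hcd : Icc c d ⊆ Icc a b) (hF : ∀ x ∈ Icc c d, F x = k) :
    ACGStar a b F (Icc c d) := by
  refine ACStar.acgStar (fun ε hε => ⟨1, one_pos, fun D ⟨_, hD, _⟩ _ => ?_⟩) isClosed_Icc hcd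
  refine (Finset.sum_nonpos fun p hp => osc_le le_rfl fun x hx y hy => ?_).trans_lt hε
  have hsub : Icc p.1 p.2 ⊆ Icc c d := Icc_subset_Icc (hD p hp).2.1.1 (hD p hp).2.2.1.2
  simp [hF x (hsub hx), hF y (hsub hy)]

theorem acgStar_cutoffPrimitive (hF : ACGStar a b F (Icc a b)) (hac : a ≤ c) (hcd : c ≤ d)
    (hdb : d ≤ b) : ACGStar a b (cutoffPrimitive F c d) (Icc a b) := by
  have hsub : Icc c d ⊆ Icc a b := Icc_subset_Icc hac hdb
  have hmid : ACGStar a b (cutoffPrimitive F c d) (Icc a b ∩ Icc c d) :=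
    hF.inter_Icc_of_sub_eq hsub hsub fun x hx y hy => by
      rw [cutoffPrimitive_of_mem_Icc hx, cutoffPrimitive_of_mem_Icc hy, sub_sub_sub_cancel_right]
  have hleft : ACGStar a b (cutoffPrimitive F c d) (Icc a c) :=
    .of_eqOn_const (Icc_subset_Icc le_rfl (hcd.trans hdb)) fun x hx =>
      cutoffPrimitive_of_le hcd hx.2
  have hright : ACGStar a b (cutoffPrimitive F c d) (Icc d b) :=
    .of_eqOn_const (Icc_subset_Icc (hac.trans hcd) le_rfl) fun x hx =>
      cutoffPrimitive_of_ge hcd hx.1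
  have hcover : Icc a b = (Icc a c ∪ Icc a b ∩ Icc c d) ∪ Icc d b := by
    rw [inter_eq_right.2 hsub, Icc_union_Icc_eq_Icc hac hcd,
      Icc_union_Icc_eq_Icc (hac.trans hcd) hdb]
  exact hcover ▸ (hleft.union hmid).union hright

theorem HasDenjoyIntegralFn.cutoff (h : HasDenjoyIntegralFn a b f F) (hac : a ≤ c) (hcd : c ≤ d)
    (hdb : d ≤ b) : HasDenjoyIntegralFn a b ((Ioo c d).indicator f) (cutoffPrimitive F c d) := by
  obtain ⟨hFc, -, hFacg, hder⟩ := h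
  refine ⟨?_, cutoffPrimitive_of_le hcd hac, acgStar_cutoffPrimitive hFacg hac hcd hdb, ?_⟩
  · refine (hFc.comp (by fun_prop) fun x _ => ?_).sub continuousOn_const
    exact ⟨hac.trans (le_max_left _ _), max_le (hcd.trans hdb) ((min_le_right _ _).trans hdb)⟩
  · filter_upwards [hder, Measure.ae_ne _ c, Measure.ae_ne _ d] with x hx hxc hxd
    rcases lt_or_gt_of_ne hxc with hxc | hxc
    · rw [indicator_of_notMem fun hmem => hmem.1.not_gt hxc]
      refine (hasDerivAt_const x 0).congr_of_eventuallyEq ?_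
      filter_upwards [Iio_mem_nhds hxc] with y hy using cutoffPrimitive_of_le hcd (le_of_lt hy)
    rcases lt_or_gt_of_ne hxd with hxd | hxd
    · rw [indicator_of_mem (show x ∈ Ioo c d from ⟨hxc, hxd⟩)]
      refine (hx.sub_const (F c)).congr_of_eventuallyEq ?_
      filter_upwards [Icc_mem_nhds hxc hxd] with y hy using cutoffPrimitive_of_mem_Icc hy
    · rw [indicator_of_notMem fun hmem => hmem.2.not_gt hxd]
      refine (hasDerivAt_const x (F d - F c)).congr_of_eventuallyEq ?_
      filter_upwards [Ioi_mem_nhds hxd] with y hy using cutoffPrimitive_of_ge hcd (le_of_lt hy)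

end DenjoyIntegral

section Integrability

open scoped Topology

variable {a b : ℝ} {f F : ℝ → ℝ} {K : Set ℝ}

theorem exists_monotone_eqOn_of_monotoneOn (hK : IsCompact K) (hF : MonotoneOn F K) :
    ∃ G : ℝ → ℝ, Monotone G ∧ EqOn F G K := by
  rcases K.eq_empty_or_nonempty with rfl | hne
  · exact ⟨0, monotone_const, eqOn_empty _ _⟩
  obtain ⟨m, hm⟩ := hK.exists_isLeast hne
  obtain ⟨M, hM⟩ := hK.exists_isGreatest hne
  exact hF.exists_monotone_extension (hF.map_isLeast hm).bddBelow (hF.map_isGreatest hM).bddAbove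

theorem integrableOn_deriv_of_monotone (hF : Monotone F) (hK : IsCompact K) :
    IntegrableOn (deriv F) K := by
  obtain ⟨r, hr⟩ := hK.isBounded.subset_closedBall 0
  have hint := (hF.monotoneOn (uIcc (-|r|) |r|)).intervalIntegrable_deriv
  rw [intervalIntegrable_iff_integrableOn_Icc_of_le (neg_le_self (abs_nonneg r))] at hint
  refine hint.mono_set (hr.trans ?_)
  rw [Real.closedBall_eq_Icc, zero_sub, zero_add]
  exact Icc_subset_Icc (neg_le_neg (le_abs_self r)) (le_abs_self r)

theorem ae_uniqueDiffWithinAt (hK : MeasurableSet K) :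
    ∀ᵐ x ∂volume.restrict K, UniqueDiffWithinAt ℝ K x := by
  filter_upwards [ae_restrict_mem hK, ae_restrict_of_ae
    ((countable_setOfPred_isolated_right_within (s := K)).ae_notMem volume)] with x hxK hx
  rw [uniqueDiffWithinAt_iff_accPt, accPt_principal_iff_nhdsWithin]
  have hright : (𝓝[K ∩ Ioi x] x).NeBot := neBot_iff.2 fun hbot => hx ⟨hxK, hbot⟩
  exact hright.mono (nhdsWithin_mono _ fun y hy => ⟨hy.1, ne_of_gt hy.2⟩)

theorem integrableOn_of_boundedVariationOn (hK : IsCompact K) (hF : BoundedVariationOn F K)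
    (hder : ∀ᵐ x ∂volume.restrict K, HasDerivAt F (f x) x) : IntegrableOn f K := by
  obtain ⟨p, q, hp, hq, hpq⟩ := hF.locallyBoundedVariationOn.exists_monotoneOn_sub_monotoneOn
  obtain ⟨P, hP, hpP⟩ := exists_monotone_eqOn_of_monotoneOn hK hp
  obtain ⟨Q, hQ, hqQ⟩ := exists_monotone_eqOn_of_monotoneOn hK hq
  have hFPQ : EqOn F (P - Q) K := fun x hx => by
    rw [hpq, Pi.sub_apply, Pi.sub_apply, hpP hx, hqQ hx]
  refine ((integrableOn_deriv_of_monotone hP hK).sub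
    (integrableOn_deriv_of_monotone hQ hK)).congr ?_
  filter_upwards [hder, ae_uniqueDiffWithinAt hK.measurableSet, ae_restrict_mem hK.measurableSet,
    ae_restrict_of_ae hP.ae_differentiableAt, ae_restrict_of_ae hQ.ae_differentiableAt]
    with x hFx huniq hxK hPx hQx
  exact huniq.eq_deriv _ (((hPx.hasDerivAt.sub hQx.hasDerivAt).hasDerivWithinAt).congr hFPQ
    (hFPQ hxK)) hFx.hasDerivWithinAt

theorem ACStar.exists_boundedVariationOn (hFc : ContinuousOn F (Icc a b)) (hK : K ⊆ Icc a b)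
    (hF : ACStar a b F K) :
    ∃ δ > 0, ∀ x y : ℝ, y - x < δ → BoundedVariationOn F (K ∩ Icc x y) := by
  obtain ⟨δ, hδ, H⟩ := hF.exists_sum_osc_le one_pos
  refine ⟨δ, hδ, fun x y hxy => ?_⟩
  suffices h : eVariationOn F (K ∩ Icc x y) ≤ 1 from ne_top_of_le_ne_top ENNReal.one_ne_top h
  refine iSup_le fun ⟨n, u, hu, huK⟩ => ?_
  have hIcc : ∀ i, Icc (u i) (u (i + 1)) ⊆ Icc a b := fun i =>
    Icc_subset_Icc (hK (huK i).1).1 (hK (huK _).1).2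
  have hlen : ∑ i ∈ Finset.range n, (u (i + 1) - u i) < δ := by
    rw [Finset.sum_range_sub]
    linarith [(huK n).2.2, (huK 0).2.1]
  have hsum := H ℕ (Finset.range n) u (fun i => u (i + 1)) (fun i _ => hu i.le_succ)
    (fun i _ => (huK i).1) (fun i _ => (huK _).1) (fun i _ => hIcc i)
    (fun i _ j _ hij => hij.lt_or_gt.imp (fun h => hu h) fun h => hu h) hlen
  calc ∑ i ∈ Finset.range n, edist (F (u (i + 1))) (F (u i))
      = ENNReal.ofReal (∑ i ∈ Finset.range n, dist (F (u (i + 1))) (F (u i))) := by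
        simp only [edist_dist, ENNReal.ofReal_sum_of_nonneg fun _ _ => dist_nonneg]
    _ ≤ ENNReal.ofReal 1 := by
        refine ENNReal.ofReal_le_ofReal ((Finset.sum_le_sum fun i _ => ?_).trans hsum)
        exact abs_sub_le_osc hFc (hIcc i) (right_mem_Icc.2 (hu i.le_succ))
          (left_mem_Icc.2 (hu i.le_succ))
    _ = 1 := ENNReal.ofReal_one

theorem ACStar.integrableOn (hFc : ContinuousOn F (Icc a b)) (hKc : IsClosed K)
    (hK : K ⊆ Icc a b) (hF : ACStar a b F K)
    (hder : ∀ᵐ x ∂volume.restrict (Icc a b), HasDerivAt F (f x) x) : IntegrableOn f K := by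
  obtain ⟨δ, hδ, hbv⟩ := hF.exists_boundedVariationOn hFc hK
  have hcomp : IsCompact K := isCompact_Icc.of_isClosed_subset hKc hK
  refine LocallyIntegrableOn.integrableOn_isCompact (fun x _ => ?_) hcomp
  refine ⟨K ∩ Icc (x - δ / 3) (x + δ / 3), inter_mem self_mem_nhdsWithin
    (mem_nhdsWithin_of_mem_nhds (Icc_mem_nhds (by linarith) (by linarith))), ?_⟩
  exact integrableOn_of_boundedVariationOn (hcomp.inter isCompact_Icc) (hbv _ _ (by linarith))
    (ae_restrict_of_ae_restrict_of_subset (inter_subset_left.trans hK) hder)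

theorem exists_setLIntegral_enorm_lt {A : Set ℝ} (hf : IntegrableOn f A) {ε : ℝ} (hε : 0 < ε) :
    ∃ δ > (0 : ℝ), ∀ s ⊆ A, volume s < ENNReal.ofReal δ →
      ∫⁻ t in s, ‖f t‖ₑ < ENNReal.ofReal ε := by
  obtain ⟨δ, hδ, H⟩ := exists_pos_setLIntegral_lt_of_measure_lt
    (μ := volume.restrict A) (f := fun t => ‖f t‖ₑ) hf.2.ne (ENNReal.ofReal_pos.2 hε).ne'
  obtain ⟨δ', -, hle⟩ := ENNReal.lt_iff_exists_real_btwn.1 hδ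
  refine ⟨δ', ENNReal.ofReal_pos.1 hle.1, fun s hs hvol => ?_⟩
  rw [← Measure.restrict_restrict_of_subset hs]
  exact H s ((Measure.restrict_apply_le A s).trans_lt (hvol.trans hle.2))

theorem ofReal_osc_primitive_le {u v : ℝ} (hf : IntervalIntegrable f volume a b)
    (huv : Icc u v ⊆ uIcc a b) :
    ENNReal.ofReal (osc (fun x => ∫ t in a..x, f t) (Icc u v)) ≤ ∫⁻ t in Ioc u v, ‖f t‖ₑ := by
  by_cases hfin : ∫⁻ t in Ioc u v, ‖f t‖ₑ = ⊤
  · exact hfin ▸ le_top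
  rw [ENNReal.ofReal_le_iff_le_toReal hfin]
  refine osc_le ENNReal.toReal_nonneg fun x hx y hy => ?_
  have hprim : ∀ z ∈ Icc u v, IntervalIntegrable f volume a z := fun z hz =>
    hf.mono_set (uIcc_subset_uIcc left_mem_uIcc (huv hz))
  have hxy : uIoc y x ⊆ Ioc u v := Ioc_subset_Ioc (le_min hy.1 hx.1) (max_le hy.2 hx.2)
  rw [intervalIntegral.integral_interval_sub_left (hprim x hx) (hprim y hy), ← Real.norm_eq_abs,
    intervalIntegral.norm_intervalIntegral_eq, ← toReal_enorm]
  exact ENNReal.toReal_mono hfin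
    ((enorm_integral_le_lintegral_enorm _).trans (lintegral_mono_set hxy))

theorem acStar_primitive (hf : IntervalIntegrable f volume a b) :
    ACStar a b (fun x => ∫ t in a..x, f t) (Icc a b) := by
  refine acStar_iff_nondeg.2 fun ε hε => ?_
  obtain ⟨δ, hδ, H⟩ := exists_setLIntegral_enorm_lt
    (intervalIntegrable_iff.1 hf) hε
  refine ⟨δ, hδ, fun D hD hlen => (ENNReal.ofReal_le_ofReal_iff hε.le).1 ?_⟩
  have hdisj : (D : Set (ℝ × ℝ)).PairwiseDisjoint fun p => Ioc p.1 p.2 := fun p hp q hq hpq =>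
    Ioc_disjoint_Ioc.2 (by
      rcases hD.nonoverlapping hp hq hpq with h | h
      · exact (min_le_left _ _).trans (h.trans (le_max_right _ _))
      · exact (min_le_right _ _).trans (h.trans (le_max_left _ _)))
  have hvol : volume (⋃ p ∈ D, Ioc p.1 p.2) < ENNReal.ofReal δ := by
    calc volume (⋃ p ∈ D, Ioc p.1 p.2) ≤ ∑ p ∈ D, volume (Ioc p.1 p.2) :=
          measure_biUnion_finset_le _ _
      _ = ENNReal.ofReal (∑ p ∈ D, (p.2 - p.1)) := by
          rw [ENNReal.ofReal_sum_of_nonneg fun p hp => sub_nonneg.2 (hD.lt p hp).le]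
          simp only [Real.volume_Ioc]
      _ < ENNReal.ofReal δ := (ENNReal.ofReal_lt_ofReal_iff hδ).2 hlen
  calc ENNReal.ofReal (∑ p ∈ D, osc (fun x => ∫ t in a..x, f t) (Icc p.1 p.2))
      = ∑ p ∈ D, ENNReal.ofReal (osc (fun x => ∫ t in a..x, f t) (Icc p.1 p.2)) :=
        ENNReal.ofReal_sum_of_nonneg fun p _ => osc_nonneg _ _
    _ ≤ ∑ p ∈ D, ∫⁻ t in Ioc p.1 p.2, ‖f t‖ₑ :=
        Finset.sum_le_sum fun p hp =>
          ofReal_osc_primitive_le hf ((hD.Icc_subset p hp).trans Icc_subset_uIcc)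
    _ = ∫⁻ t in ⋃ p ∈ D, Ioc p.1 p.2, ‖f t‖ₑ :=
        (lintegral_biUnion_finset hdisj (fun _ _ => measurableSet_Ioc) _).symm
    _ ≤ ENNReal.ofReal ε := (H _ (iUnion₂_subset fun p hp => ?_) hvol).le
  exact Ioc_subset_Ioc ((min_le_left _ _).trans (hD.fst_mem_Icc hp).1)
    ((hD.snd_mem_Icc hp).2.trans (le_max_right _ _))

theorem hasDenjoyIntegralFn_primitive (hab : a ≤ b) (hf : IntegrableOn f (Icc a b)) :
    HasDenjoyIntegralFn a b f fun x => ∫ t in a..x, f t := by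
  have hint : IntervalIntegrable f volume a b :=
    (intervalIntegrable_iff_integrableOn_Icc_of_le hab).2 hf
  rw [← uIcc_of_le hab] at hf
  refine ⟨?_, intervalIntegral.integral_same, ?_, ?_⟩
  · rw [← uIcc_of_le hab]
    exact intervalIntegral.continuousOn_primitive_interval hf
  · exact (acStar_primitive hint).acgStar isClosed_Icc Subset.rfl
  · rw [ae_restrict_iff' measurableSet_Icc]
    filter_upwards [hint.ae_hasDerivAt_integral] with x hx hmem
    rw [uIcc_of_le hab] at hx
    exact hx hmem a (left_mem_Icc.2 hab)

end Integrability

section Hierarchy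

open scoped Topology Ordinal

variable {a b : ℝ} {f F : ℝ → ℝ}

theorem card_le_aleph0_iff_lt_omega_one (α : Ordinal.{0}) :
    α.card ≤ Cardinal.aleph0 ↔ α < ω₁ := by
  rw [Cardinal.card_le_iff, Cardinal.succ_aleph0, Cardinal.ord_aleph]

theorem exists_forall_lt_of_forall_card_le_aleph0 {ι : Type} [Countable ι] (β : ι → Ordinal.{0})
    (hβ : ∀ i, (β i).card ≤ Cardinal.aleph0) :
    ∃ α : Ordinal.{0}, α.card ≤ Cardinal.aleph0 ∧ ∀ i, β i < α := by
  simp only [card_le_aleph0_iff_lt_omega_one] at hβ ⊢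
  exact ⟨⨆ i, Order.succ (β i), Ordinal.iSup_lt_omega_one fun i =>
    (Cardinal.isSuccLimit_omega 1).succ_lt (hβ i),
    fun i => (Order.lt_succ (β i)).trans_le (Ordinal.le_iSup _ i)⟩

theorem denLevel_zero : DenLevel a b 0 = {f | IntegrableOn f (Icc a b)} := by
  rw [DenLevel, WellFounded.fix_eq, if_pos rfl]

theorem denLevel_of_ne_zero {α : Ordinal.{0}} (hα : α ≠ 0) :
    DenLevel a b α = StepSet a b (LimSet a b (⋃ β : Iio α, DenLevel a b β.1)) := by
  rw [DenLevel, WellFounded.fix_eq, if_neg hα]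

/-- `f` belongs to `Den_α[a,b]` for some countable ordinal `α`. -/
def InDenHierarchy (a b : ℝ) (f : ℝ → ℝ) : Prop :=
  ∃ α : Ordinal.{0}, α.card ≤ Cardinal.aleph0 ∧ f ∈ DenLevel a b α

theorem inDenHierarchy_zero : InDenHierarchy a b 0 :=
  ⟨0, by simp, denLevel_zero (a := a) (b := b) ▸ integrableOn_zero⟩

theorem mem_limSet_of_mem {X : Set (ℝ → ℝ)} (hab : a < b) (h : HasDenjoyIntegralFn a b f F)
    (hX : f ∈ X) (hf : (Ioo a b).indicator f = f) : f ∈ LimSet a b X := by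
  refine ⟨fun _ => a, fun _ => b, fun _ => ⟨le_rfl, le_rfl, le_rfl, le_rfl⟩, iUnion_const _,
    fun _ _ => by rwa [hf], ⟨F b - F a, ?_⟩, ⟨F b - F a, ?_⟩⟩
  · have hlim : Tendsto F (𝓝[>] a) (𝓝 (F a)) :=
      (h.1 a (left_mem_Icc.2 hab.le)).mono_left (nhdsWithin_le_iff.2 (Icc_mem_nhdsGT hab))
    refine (hlim.const_sub (F b)).congr' ?_
    filter_upwards [Ioo_mem_nhdsGT hab] with c hc
    exact (h.denjoyIntegral_eq hc.1.le hc.2.le le_rfl).symm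
  · have hlim : Tendsto F (𝓝[<] b) (𝓝 (F b)) :=
      (h.1 b (right_mem_Icc.2 hab.le)).mono_left (nhdsWithin_le_iff.2 (Icc_mem_nhdsLT hab))
    refine (hlim.sub_const (F a)).congr' ?_
    filter_upwards [Ioo_mem_nhdsLT hab] with c hc
    exact (h.denjoyIntegral_eq le_rfl hc.1.le hc.2.le).symm

theorem HasDenjoyIntegralFn.inDenHierarchy_of_acStar {K : Set ℝ} (h : HasDenjoyIntegralFn a b f F)
    (hab : a < b) (hK : IsClosed K) (hKab : K ⊆ Icc a b) (hA : ACStar a b F K)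
    (hgap : ∀ c d, c < d → Ioo c d ⊆ Ioo a b \ K →
      InDenHierarchy a b ((Ioo c d).indicator f)) : InDenHierarchy a b f := by
  obtain ⟨c, d, hcd, hdisj, hunion⟩ := exists_iUnion_disjoint_Ioo_eq (isOpen_Ioo.sdiff hK)
    ((Metric.isBounded_Ioo a b).subset sdiff_subset)
  have hsub : ∀ n, Ioo (c n) (d n) ⊆ Ioo a b \ K := fun n =>
    hunion ▸ subset_iUnion (fun n => Ioo (c n) (d n)) n
  have hlevel : ∀ n, ∃ β : Ordinal.{0}, β.card ≤ Cardinal.aleph0 ∧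
      (c n < d n → (Ioo (c n) (d n)).indicator f ∈ DenLevel a b β) := fun n => by
    by_cases hn : c n < d n
    · obtain ⟨β, hβ, hmem⟩ := hgap _ _ hn (hsub n)
      exact ⟨β, hβ, fun _ => hmem⟩
    · exact ⟨0, by simp, fun hlt => absurd hlt hn⟩
  choose β hβ hmem using hlevel
  obtain ⟨α, hα, hlt⟩ := exists_forall_lt_of_forall_card_le_aleph0 β hβ
  refine ⟨α, hα, ?_⟩
  rw [denLevel_of_ne_zero (pos_of_gt (hlt 0)).ne']
  refine ⟨K, hK, hKab, c, d, hcd, hdisj, hunion,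
    hA.integrableOn h.1 hK hKab h.2.2.2, fun n hn => ?_, F, h, hA⟩
  have hIoo : Ioo (c n) (d n) ⊆ Ioo a b := (hsub n).trans sdiff_subset
  have hle := (Ioo_subset_Ioo_iff hn).1 hIoo
  refine mem_limSet_of_mem hab (h.cutoff hle.1 hn.le hle.2)
    (mem_iUnion.2 ⟨⟨β n, hlt n⟩, hmem n hn⟩) ?_
  rw [indicator_indicator, inter_eq_right.2 hIoo]

theorem HasDenjoyIntegralFn.inDenHierarchy_indicator {u v : ℝ} {P : Set ℝ}
    (h : HasDenjoyIntegralFn a b f F) (huv : u < v) (hsub : Icc u v ⊆ Icc a b) (hP : IsClosed P)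
    (hPuv : P ⊆ Icc u v) (hA : ACStar a b F P)
    (hgap : ∀ c d, c < d → Ioo c d ⊆ Ioo u v \ P →
      InDenHierarchy a b ((Ioo c d).indicator f)) :
    InDenHierarchy a b ((Ioo u v).indicator f) := by
  obtain ⟨hau, hvb⟩ := (Icc_subset_Icc_iff huv.le).1 hsub
  have hcut := h.cutoff hau huv.le hvb
  have hAcut : ACStar a b (cutoffPrimitive F u v) P :=
    hA.transfer Subset.rfl fun x hx y hy _ hxy => ⟨hxy, (osc_congr fun s hs t ht => by
      have hIcc : Icc x y ⊆ Icc u v := Icc_subset_Icc (hPuv hx).1 (hPuv hy).2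
      rw [cutoffPrimitive_of_mem_Icc (hIcc hs), cutoffPrimitive_of_mem_Icc (hIcc ht),
        sub_sub_sub_cancel_right]).le⟩
  refine hcut.inDenHierarchy_of_acStar (hau.trans_lt (huv.trans_le hvb))
    (K := insert u (insert v P)) ?_ ?_ ((hAcut.insert hcut.1 v).insert hcut.1 u) ?_
  · simpa only [insert_eq] using isClosed_singleton.union (isClosed_singleton.union hP)
  · exact insert_subset (hsub (left_mem_Icc.2 huv.le))
      (insert_subset (hsub (right_mem_Icc.2 huv.le)) (hPuv.trans hsub))
  · intro c d hcd hIoo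
    rw [indicator_indicator]
    rcases (Ioo c d ∩ Ioo u v).eq_empty_or_nonempty with hempty | ⟨x, hx, hxuv⟩
    · rw [hempty, indicator_empty]
      exact inDenHierarchy_zero
    have huc : u ≤ c := not_lt.1 fun hcu =>
      (hIoo ⟨hcu, hxuv.1.trans hx.2⟩).2 (mem_insert _ _)
    have hdv : d ≤ v := not_lt.1 fun hvd =>
      (hIoo ⟨hx.1.trans hxuv.2, hvd⟩).2 (mem_insert_of_mem _ (mem_insert _ _))
    rw [inter_eq_left.2 (Ioo_subset_Ioo huc hdv)]
    exact hgap c d hcd fun y hy => ⟨Ioo_subset_Ioo huc hdv hy, fun hyP =>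
      (hIoo hy).2 (mem_insert_of_mem _ (mem_insert_of_mem _ hyP))⟩

/-- The restriction of `f` to any compact subinterval of `[a,b]` contained in `U` lies in the
hierarchy `Den_α[a,b]`. -/
def DenOn (a b : ℝ) (f : ℝ → ℝ) (U : Set ℝ) : Prop :=
  ∀ u v, u < v → Icc u v ⊆ Icc a b → Icc u v ⊆ U → InDenHierarchy a b ((Ioo u v).indicator f)

theorem DenOn.mono {U V : Set ℝ} (h : DenOn a b f V) (hUV : U ⊆ V) : DenOn a b f U :=
  fun u v huv hab hU => h u v huv hab (hU.trans hUV)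

theorem exists_seq_osc_uIcc_le_geometric (hF : ContinuousOn F (Icc a b)) :
    ∃ r : ℕ → ℝ, (∀ n, 0 < r n) ∧ Tendsto r atTop (𝓝 0) ∧
      ∀ n, ∀ x ∈ Icc a b, ∀ y ∈ Icc a b, |x - y| = r n → osc F (uIcc x y) ≤ (1 / 2) ^ n := by
  choose δ hδ hosc using fun n : ℕ => exists_osc_le hF (ε := (1 / 2) ^ n) (by positivity)
  refine ⟨fun n => min (δ n / 2) (1 / (n + 1)),
    fun n => lt_min (half_pos (hδ n)) Nat.one_div_pos_of_nat, ?_, fun n x hx y hy hxy => ?_⟩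
  · exact squeeze_zero (fun n => (lt_min (half_pos (hδ n)) Nat.one_div_pos_of_nat).le)
      (fun n => min_le_right _ _) tendsto_one_div_add_atTop_nhds_zero_nat
  · refine hosc n _ _ (uIcc_subset_Icc hx hy) ?_
    rw [max_sub_min_eq_abs', hxy]
    exact (min_le_left _ _).trans_lt (half_lt_self (hδ n))

theorem summable_osc_uIcc_of_abs_sub_mem_range {l : ℝ} {E : Set ℝ} {r : ℕ → ℝ} (hr : ∀ n, 0 < r n)
    (hE : ∀ x ∈ E, |x - l| ∈ range r)
    (hosc : ∀ n, ∀ x ∈ E, |x - l| = r n → osc F (uIcc x l) ≤ (1 / 2) ^ n) :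
    Summable fun x : E => osc F (uIcc x l) := by
  choose! n hn using hE
  have hinj : Function.Injective fun x : E => (n x, decide (l < x)) := by
    rintro ⟨x, hx⟩ ⟨y, hy⟩ hxy
    obtain ⟨hnxy, hlxy⟩ := Prod.mk.inj hxy
    have habs : |x - l| = |y - l| := by rw [← hn x hx, ← hn y hy, hnxy]
    rcases abs_eq_abs.1 habs with heq | hneg
    · exact Subtype.ext (sub_left_injective heq)
    · have hiff : l < x ↔ l < y := decide_eq_decide.1 hlxy
      have hne : x - l ≠ 0 := abs_pos.1 (hn x hx ▸ hr _)
      rcases lt_or_gt_of_ne hne with hlt | hgt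
      · exact absurd (hiff.2 (by linarith)) (by linarith)
      · exact absurd (hiff.1 (by linarith)) (by linarith)
  have hsum : Summable fun p : ℕ × Bool => (1 / 2 : ℝ) ^ p.1 * 1 :=
    summable_geometric_two.mul_of_nonneg (g := fun _ : Bool => 1) .of_finite
      (fun n => by positivity) fun _ => zero_le_one
  refine .of_nonneg_of_le (fun _ => osc_nonneg _ _) (fun x => ?_) (hsum.comp_injective hinj)
  exact (hosc _ x x.2 (hn x x.2).symm).trans_eq (mul_one _).symm

-- The points of `[u,v]` at the distances `r n` from `l`, together with `l`, form a closed `AC_*`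
-- set, because the oscillations of `F` between these points and `l` are summable. Its gaps stay
-- away from `l`.
theorem DenOn.of_sdiff_singleton {U : Set ℝ} {l : ℝ} (h : HasDenjoyIntegralFn a b f F)
    (hU : DenOn a b f (U \ {l})) : DenOn a b f U := by
  intro u v huv hab hUuv
  by_cases hl : l ∈ Icc u v
  swap
  · exact hU u v huv hab (subset_sdiff_singleton hUuv hl)
  obtain ⟨r, hr, hr0, hosc⟩ := exists_seq_osc_uIcc_le_geometric h.1
  set E := {x ∈ Icc u v | |x - l| ∈ range r}
  have hA : ACStar a b F (insert l E) := .insert_of_summable_osc h.1 (hab hl)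
    (summable_osc_uIcc_of_abs_sub_mem_range hr (fun x hx => hx.2)
      fun n x hx => hosc n x (hab hx.1) l (hab hl))
  have hclosed : IsClosed (insert l E) := by
    have hEeq : insert l E = Icc u v ∩ (fun x => |x - l|) ⁻¹' insert 0 (range r) := by
      ext x
      simp only [E, mem_insert_iff, mem_inter_iff, mem_preimage, mem_ofPred_eq, abs_eq_zero,
        sub_eq_zero]
      grind
    rw [hEeq]
    exact isClosed_Icc.inter (hr0.isCompact_insert_range.isClosed.preimage (by fun_prop))
  refine h.inDenHierarchy_indicator huv hab hclosed (insert_subset hl (sep_subset _ _)) hA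
    fun c d hcd hIoo => ?_
  obtain ⟨huc, hdv⟩ := (Ioo_subset_Ioo_iff hcd).1 (hIoo.trans sdiff_subset)
  have hIcc : Icc c d ⊆ Icc u v := Icc_subset_Icc huc hdv
  refine hU c d hcd (hIcc.trans hab) (subset_sdiff_singleton (hIcc.trans hUuv) fun hlcd => ?_)
  have havoid : ∀ x ∈ Ioo c d, x ≠ l ∧ |x - l| ∉ range r := fun x hx =>
    ⟨fun hxl => (hIoo hx).2 (hxl ▸ mem_insert _ _),
      fun hxr => (hIoo hx).2 (mem_insert_of_mem _ ⟨hIcc (Ioo_subset_Icc_self hx), hxr⟩)⟩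
  obtain ⟨n, hn⟩ := (hr0.eventually_lt_const (sub_pos.2 hcd)).exists
  have hrn := hr n
  rcases hlcd.1.eq_or_lt with rfl | hcl
  · refine (havoid (c + r n) ⟨by linarith, by linarith⟩).2 ⟨n, ?_⟩
    rw [add_sub_cancel_left, abs_of_pos hrn]
  rcases hlcd.2.eq_or_lt with rfl | hld
  · refine (havoid (l - r n) ⟨by linarith, by linarith⟩).2 ⟨n, ?_⟩
    rw [sub_sub_cancel_left, abs_neg, abs_of_pos hrn]
  · exact (havoid l ⟨hcl, hld⟩).1 rfl

theorem DenOn.Icc_of_Ioo {c d : ℝ} (h : HasDenjoyIntegralFn a b f F)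
    (hIoo : DenOn a b f (Ioo c d)) : DenOn a b f (Icc c d) := by
  refine .of_sdiff_singleton (l := d) h (.of_sdiff_singleton (l := c) h ?_)
  rwa [Icc_sdiff_right, Ico_sdiff_left]

theorem DenOn.Icc_trans {s t u : ℝ} (h : HasDenjoyIntegralFn a b f F) (hst : DenOn a b f (Icc s t))
    (htu : DenOn a b f (Icc t u)) : DenOn a b f (Icc s u) := by
  refine .of_sdiff_singleton (l := t) h fun c d hcd hab hsub => ?_
  have ht : t ∉ Icc c d := fun htcd => (hsub htcd).2 rfl
  have hc := (hsub (left_mem_Icc.2 hcd.le)).1.1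
  have hd := (hsub (right_mem_Icc.2 hcd.le)).1.2
  rcases lt_or_ge t c with htc | hct
  · exact htu c d hcd hab (Icc_subset_Icc htc.le hd)
  · exact hst c d hcd hab (Icc_subset_Icc hc (not_le.1 fun hdt => ht ⟨hct, hdt⟩).le)

theorem DenOn.sUnion {S : Set (Set ℝ)} (h : HasDenjoyIntegralFn a b f F)
    (hopen : ∀ V ∈ S, IsOpen V) (hS : ∀ V ∈ S, DenOn a b f V) : DenOn a b f (⋃₀ S) := by
  intro u v huv hab hUuv
  obtain ⟨t, ht0, -, ⟨m, hm⟩, ht⟩ := exists_monotone_Icc_subset_open_cover_Icc huv.le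
    (c := fun V : S => (Subtype.val ⁻¹' V.1 : Set (Icc u v)))
    (fun V => (hopen V V.2).preimage continuous_subtype_val)
    fun x _ => mem_iUnion.2 <| by simpa using hUuv x.2
  have hchain : ∀ n, DenOn a b f (Icc u (t n)) := fun n => by
    induction n with
    | zero =>
      rw [ht0, Icc_self]
      intro c d hcd _ hsub
      exact absurd (subsingleton_singleton (hsub (left_mem_Icc.2 hcd.le))
        (hsub (right_mem_Icc.2 hcd.le))) hcd.ne
    | succ n ih =>
      obtain ⟨V, hV⟩ := ht n
      refine ih.Icc_trans h ((hS V V.2).mono fun x hx => ?_)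
      exact hV (a := ⟨x, (t n).2.1.trans hx.1, hx.2.trans (t (n + 1)).2.2⟩) hx
  exact hchain m u v huv hab (by rw [hm m le_rfl])

theorem exists_isOpen_inter_subset_of_subset_iUnion {X ι : Type*} [MetricSpace X]
    [CompleteSpace X] [Countable ι] {P : Set X} {C : ι → Set X} (hP : IsClosed P)
    (hne : P.Nonempty) (hC : ∀ i, IsClosed (C i)) (hPC : P ⊆ ⋃ i, C i) :
    ∃ i, ∃ V, IsOpen V ∧ (P ∩ V).Nonempty ∧ P ∩ V ⊆ C i := by
  have : CompleteSpace P := hP.completeSpace_coe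
  have : Nonempty P := hne.to_subtype
  obtain ⟨i, x, hx⟩ := nonempty_interior_of_iUnion_of_closed
    (f := fun i => (Subtype.val ⁻¹' C i : Set P)) (fun i => (hC i).preimage continuous_subtype_val)
    (by rw [← preimage_iUnion, preimage_val_eq_univ_of_subset hPC])
  obtain ⟨V, hV, hVeq⟩ := isOpen_induced_iff.1
    (isOpen_interior (s := (Subtype.val ⁻¹' C i : Set P)))
  rw [← hVeq] at hx
  refine ⟨i, V, hV, ⟨x, x.2, hx⟩, fun y hy => ?_⟩
  have hint : (⟨y, hy.1⟩ : P) ∈ interior (Subtype.val ⁻¹' C i) := hVeq ▸ hy.2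
  have hmem : (⟨y, hy.1⟩ : P) ∈ Subtype.val ⁻¹' C i := interior_subset hint
  exact hmem

theorem HasDenjoyIntegralFn.denOn_univ (h : HasDenjoyIntegralFn a b f F) : DenOn a b f univ := by
  obtain ⟨C, hC, hcover⟩ := h.2.2.1
  set U := ⋃₀ {V | IsOpen V ∧ DenOn a b f V}
  have hUopen : IsOpen U := isOpen_sUnion fun V hV => hV.1
  have hU : DenOn a b f U := .sUnion h (fun V hV => hV.1) fun V hV => hV.2
  rcases (Icc a b \ U).eq_empty_or_nonempty with hempty | hne
  · exact fun u v huv hab _ => hU u v huv hab (hab.trans (sdiff_eq_empty.1 hempty))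
  obtain ⟨n, V, hV, ⟨x, hxP, hxV⟩, hPV⟩ := exists_isOpen_inter_subset_of_subset_iUnion
    (isClosed_Icc.sdiff hUopen) hne (fun n => (hC n).1) (hcover ▸ sdiff_subset)
  suffices hDenV : DenOn a b f V from absurd ⟨V, ⟨hV, hDenV⟩, hxV⟩ hxP.2
  intro u v huv hab hVuv
  refine h.inDenHierarchy_indicator huv hab
    ((isClosed_Icc.sdiff hUopen).inter (isClosed_Icc (a := u) (b := v))) inter_subset_right
    ((hC n).2.2.mono ((inter_subset_inter_right _ hVuv).trans hPV)) fun c d hcd hIoo => ?_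
  obtain ⟨huc, hdv⟩ := (Ioo_subset_Ioo_iff hcd).1 (hIoo.trans sdiff_subset)
  have hIcc : Icc c d ⊆ Icc u v := Icc_subset_Icc huc hdv
  have hIooU : Ioo c d ⊆ U := fun y hy => by
    have hyuv := hIcc (Ioo_subset_Icc_self hy)
    by_contra hyU
    exact (hIoo hy).2 ⟨⟨hab hyuv, hyU⟩, hyuv⟩
  exact (hU.mono hIooU).Icc_of_Ioo h c d hcd (hIcc.trans hab) Subset.rfl

theorem HasDenjoyIntegralFn.inDenHierarchy (h : HasDenjoyIntegralFn a b f F) (hab : a < b) :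
    InDenHierarchy a b f := by
  refine h.inDenHierarchy_of_acStar hab isClosed_empty (empty_subset _)
    (.of_subsingleton subsingleton_empty) fun c d hcd hIoo => ?_
  obtain ⟨hac, hdb⟩ := (Ioo_subset_Ioo_iff hcd).1 (hIoo.trans sdiff_subset)
  exact h.denOn_univ c d hcd (Icc_subset_Icc hac hdb) (subset_univ _)

end Hierarchy

section TransfiniteDerivatives

variable {D D' : Set ℝ → Set ℝ} {K : Set ℝ} {α : Ordinal.{0}} {x a b : ℝ} {f F : ℝ → ℝ}

theorem card_add_one_le_aleph0 (hα : α.card ≤ Cardinal.aleph0) :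
    (α + 1).card ≤ Cardinal.aleph0 := by
  rw [Ordinal.card_add, Ordinal.card_one]
  exact Cardinal.add_le_aleph0.2 ⟨hα, Cardinal.one_le_aleph0⟩

theorem derivIter_zero : derivIter D K 0 = K :=
  Ordinal.limitRecOn_zero ..

theorem derivIter_add_one : derivIter D K (α + 1) = D (derivIter D K α) :=
  Ordinal.limitRecOn_add_one ..

theorem derivIter_of_isSuccLimit (hα : Order.IsSuccLimit α) :
    derivIter D K α = ⋂ β : Iio α, derivIter D K β.1 :=
  Ordinal.limitRecOn_limit _ _ _ _ hα

/-- A derivation on subsets of the line: an operation that shrinks every set and preserves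
closedness, such as `DF a b F`. -/
structure IsClosedDerivation (D : Set ℝ → Set ℝ) : Prop where
  subset : ∀ K, D K ⊆ K
  isClosed : ∀ K, IsClosed K → IsClosed (D K)

namespace IsClosedDerivation

theorem isClosed_derivIter (hD : IsClosedDerivation D) (hK : IsClosed K) (α : Ordinal.{0}) :
    IsClosed (derivIter D K α) := by
  induction α using Ordinal.limitRecOn with
  | zero => rwa [derivIter_zero]
  | add_one α ih =>
    rw [derivIter_add_one]
    exact hD.isClosed _ ih
  | limit α hα ih =>
    rw [derivIter_of_isSuccLimit hα]
    exact isClosed_iInter fun β => ih β.1 β.2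

theorem antitone_derivIter (hD : IsClosedDerivation D) (K : Set ℝ) :
    Antitone (derivIter D K) := by
  intro α β hαβ
  induction β using Ordinal.limitRecOn with
  | zero => rw [nonpos_iff_eq_zero.1 hαβ]
  | add_one β ih =>
    rcases hαβ.eq_or_lt with rfl | hlt
    · exact le_rfl
    · rw [derivIter_add_one]
      exact (hD.subset _).trans (ih (Order.lt_add_one_iff.1 hlt))
  | limit β hβ ih =>
    rcases hαβ.eq_or_lt with rfl | hlt
    · exact le_rfl
    · rw [derivIter_of_isSuccLimit hβ]
      exact iInter_subset (fun γ : Iio β => derivIter D K γ.1) ⟨α, hlt⟩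

theorem derivIter_subset (hD : IsClosedDerivation D) (K : Set ℝ) (α : Ordinal.{0}) :
    derivIter D K α ⊆ K :=
  (hD.antitone_derivIter K (zero_le (a := α))).trans derivIter_zero.subset

theorem derivIter_congr (hD : IsClosedDerivation D) (hK : IsClosed K)
    (h : ∀ L, IsClosed L → L ⊆ K → D L = D' L) : derivIter D K = derivIter D' K := by
  funext α
  induction α using Ordinal.limitRecOn with
  | zero => rw [derivIter_zero, derivIter_zero]
  | add_one α ih =>
    rw [derivIter_add_one, derivIter_add_one, ← ih]
    exact h _ (hD.isClosed_derivIter hK α) (hD.derivIter_subset K α)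
  | limit α hα ih =>
    rw [derivIter_of_isSuccLimit hα, derivIter_of_isSuccLimit hα]
    exact iInter_congr fun β => ih β.1 β.2

/-- Cantor–Bendixson: each basic open set that is ever emptied is emptied at some countable
stage, and there are only countably many basic open sets. -/
theorem exists_derivIter_add_one_eq (hD : IsClosedDerivation D) (hK : IsClosed K) :
    ∃ α : Ordinal.{0}, α.card ≤ Cardinal.aleph0 ∧ derivIter D K (α + 1) = derivIter D K α := by
  have hstage : ∀ U : TopologicalSpace.countableBasis ℝ, ∃ β : Ordinal.{0},
      β.card ≤ Cardinal.aleph0 ∧ ∀ γ : Ordinal.{0}, γ.card ≤ Cardinal.aleph0 →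
        Disjoint U.1 (derivIter D K γ) → Disjoint U.1 (derivIter D K β) := fun U => by
    by_cases h : ∃ β : Ordinal.{0}, β.card ≤ Cardinal.aleph0 ∧ Disjoint U.1 (derivIter D K β)
    · obtain ⟨β, hβ, hdisj⟩ := h
      exact ⟨β, hβ, fun _ _ _ => hdisj⟩
    · exact ⟨0, by simp, fun γ hγ hdisj => absurd ⟨γ, hγ, hdisj⟩ h⟩
  choose β hβ hdisj using hstage
  obtain ⟨α, hα, hlt⟩ := exists_forall_lt_of_forall_card_le_aleph0 β hβ
  refine ⟨α, hα, (hD.antitone_derivIter K le_self_add).antisymm fun x hx => ?_⟩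
  by_contra hx'
  obtain ⟨U, hU, hxU, hUsub⟩ :=
    (TopologicalSpace.isBasis_countableBasis ℝ).exists_subset_of_mem_open hx'
      (hD.isClosed_derivIter hK (α + 1)).isOpen_compl
  have hUβ := hdisj ⟨U, hU⟩ (α + 1) (card_add_one_le_aleph0 hα)
    (subset_compl_iff_disjoint_right.1 hUsub)
  exact disjoint_left.1 hUβ hxU (hD.antitone_derivIter K (hlt ⟨U, hU⟩).le hx)

end IsClosedDerivation

theorem exists_mem_derivIter_notMem_add_one (hx : x ∈ K) (hxα : x ∉ derivIter D K α) :
    ∃ β < α, x ∈ derivIter D K β ∧ x ∉ derivIter D K (β + 1) := by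
  induction α using Ordinal.limitRecOn with
  | zero => exact absurd hx (by rwa [derivIter_zero] at hxα)
  | add_one α ih =>
    by_cases hmem : x ∈ derivIter D K α
    · exact ⟨α, Order.lt_add_one_iff.2 le_rfl, hmem, hxα⟩
    · obtain ⟨β, hβ, hβx⟩ := ih hmem
      exact ⟨β, hβ.trans (Order.lt_add_one_iff.2 le_rfl), hβx⟩
  | limit α hα ih =>
    rw [derivIter_of_isSuccLimit hα, mem_iInter, not_forall] at hxα
    obtain ⟨γ, hγ⟩ := hxα
    obtain ⟨β, hβ, hβx⟩ := ih γ.1 γ.2 hγ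
    exact ⟨β, hβ.trans γ.2, hβx⟩

theorem isClosedDerivation_DF (a b : ℝ) (F : ℝ → ℝ) : IsClosedDerivation (DF a b F) where
  subset _ := sep_subset _ _
  isClosed K hK := by
    have hDF : DF a b F K =
        K ∩ (⋃ (c) (d) (_ : ACStar a b F (Icc c d ∩ K)), Ioo c d)ᶜ := by
      ext x
      simp only [DF, mem_ofPred_eq, mem_inter_iff, mem_compl_iff, mem_iUnion, mem_Ioo,
        exists_prop, not_exists, not_and]
      exact and_congr_right fun _ => forall₂_congr fun c d =>
        ⟨fun h hA hc hd => h hc hd hA, fun h hc hd hA => h hA hc hd⟩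
    rw [hDF]
    exact hK.inter (isOpen_iUnion fun c => isOpen_iUnion fun d =>
      isOpen_iUnion fun _ => isOpen_Ioo).isClosed_compl

theorem DfF_eq_DF (hFc : ContinuousOn F (Icc a b))
    (hder : ∀ᵐ x ∂(volume.restrict (Icc a b)), HasDerivAt F (f x) x) (hK : IsClosed K)
    (hKab : K ⊆ Icc a b) : DfF a b f F K = DF a b F K :=
  union_eq_right.2 fun _ hx => ⟨hx.1, fun c d hc hd hA => hx.2 c d hc hd <|
    hA.integrableOn hFc (isClosed_Icc.inter hK) (inter_subset_right.trans hKab) hder⟩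

theorem ACGStar.exists_derivIter_DF_eq_empty (hF : ACGStar a b F (Icc a b)) :
    ∃ α : Ordinal.{0}, α.card ≤ Cardinal.aleph0 ∧
      derivIter (DF a b F) (Icc a b) (α + 1) = ∅ := by
  have hD := isClosedDerivation_DF a b F
  obtain ⟨α, hα, hstable⟩ := hD.exists_derivIter_add_one_eq (isClosed_Icc (a := a) (b := b))
  refine ⟨α, hα, hstable ▸ not_nonempty_iff_eq_empty.1 fun hne => ?_⟩
  obtain ⟨C, hC, hcover⟩ := hF
  obtain ⟨n, V, hV, ⟨x, hx, hxV⟩, hVC⟩ := exists_isOpen_inter_subset_of_subset_iUnion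
    (hD.isClosed_derivIter isClosed_Icc α) hne (fun n => (hC n).1)
    (hcover ▸ hD.derivIter_subset _ α)
  obtain ⟨c, d, -, hcd, hcdV⟩ := exists_Icc_mem_subset_of_mem_nhds (hV.mem_nhds hxV)
  obtain ⟨hcx, hxd⟩ := Icc_mem_nhds_iff.1 hcd
  have hxD : x ∈ DF a b F (derivIter (DF a b F) (Icc a b) α) := by
    rwa [← derivIter_add_one (D := DF a b F), hstable]
  exact hxD.2 c d hcx hxd ((hC n).2.2.mono fun y hy => hVC ⟨hy.2, hcdV hy.1⟩)

theorem countable_Iio_of_card_le_aleph0 (hα : α.card ≤ Cardinal.aleph0) : (Iio α).Countable := by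
  rwa [← Cardinal.le_aleph0_iff_set_countable, Cardinal.mk_Iio_ordinal, Cardinal.lift_le_aleph0]

theorem exists_rat_acStar_of_notMem_DF (hx : x ∈ K) (hxD : x ∉ DF a b F K) :
    ∃ p q : ℚ, x ∈ Icc (p : ℝ) q ∧ ACStar a b F (Icc (p : ℝ) q ∩ K) := by
  simp only [DF, mem_ofPred_eq, not_and, not_forall, not_not] at hxD
  obtain ⟨c, d, hcx, hxd, hA⟩ := hxD hx
  obtain ⟨p, hcp, hpx⟩ := exists_rat_btwn hcx
  obtain ⟨q, hxq, hqd⟩ := exists_rat_btwn hxd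
  exact ⟨p, q, ⟨hpx.le, hxq.le⟩,
    hA.mono (inter_subset_inter_left _ (Icc_subset_Icc hcp.le hqd.le))⟩

theorem acgStar_of_derivIter_DF_eq_empty (hα : α.card ≤ Cardinal.aleph0)
    (hempty : derivIter (DF a b F) (Icc a b) α = ∅) : ACGStar a b F (Icc a b) := by
  have hD := isClosedDerivation_DF a b F
  have : Countable (Iio α) := (countable_Iio_of_card_le_aleph0 hα).to_subtype
  let piece : Iio α × ℚ × ℚ → Set ℝ := fun i =>
    Icc (i.2.1 : ℝ) i.2.2 ∩ derivIter (DF a b F) (Icc a b) i.1.1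
  have hpiece : ∀ i, piece i ⊆ Icc a b := fun i =>
    inter_subset_right.trans (hD.derivIter_subset _ _)
  have hunion : Icc a b = ⋃ i : {i // ACStar a b F (piece i)}, piece i.1 := by
    refine Subset.antisymm (fun x hx => ?_) (iUnion_subset fun i => hpiece i.1)
    obtain ⟨β, hβ, hxβ, hxβ'⟩ :=
      exists_mem_derivIter_notMem_add_one (D := DF a b F) (α := α) hx (by simp [hempty])
    obtain ⟨p, q, hxpq, hA⟩ := exists_rat_acStar_of_notMem_DF hxβ (derivIter_add_one ▸ hxβ')
    exact mem_iUnion.2 ⟨⟨⟨⟨β, hβ⟩, p, q⟩, hA⟩, hxpq, hxβ⟩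
  rw [hunion]
  exact ACGStar.iUnion (fun i => isClosed_Icc.inter (hD.isClosed_derivIter isClosed_Icc _))
    (fun i => hpiece i.1) fun i => i.2

theorem acgStar_iff_exists_derivIter_DF_eq_empty :
    ACGStar a b F (Icc a b) ↔ ∃ α : Ordinal.{0}, α.card ≤ Cardinal.aleph0 ∧
      derivIter (DF a b F) (Icc a b) (α + 1) = ∅ :=
  ⟨ACGStar.exists_derivIter_DF_eq_empty, fun ⟨_, hα, hempty⟩ =>
    acgStar_of_derivIter_DF_eq_empty (card_add_one_le_aleph0 hα) hempty⟩

theorem denjoyIntegrable_of_mem_denLevel (hab : a ≤ b) (hf : f ∈ DenLevel a b α) :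
    DenjoyIntegrable a b f := by
  rcases eq_or_ne α 0 with rfl | hα
  · rw [denLevel_zero] at hf
    exact ⟨_, hasDenjoyIntegralFn_primitive hab hf⟩
  · obtain ⟨K, -, -, c, d, -, -, -, -, -, G, hG, -⟩ := denLevel_of_ne_zero hα ▸ hf
    exact ⟨G, hG⟩

end TransfiniteDerivatives

theorem denjoy_tfae_general (a b : ℝ) (hab : a < b) (f F : ℝ → ℝ)
    (hFc : ContinuousOn F (Icc a b)) (hFa : F a = 0) :
    List.TFAE [
      DenjoyIntegrable a b f ∧ ∀ x ∈ Icc a b, F x = denjoyIntegral a x f,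
      ∃ α : Ordinal.{0}, α.card ≤ Cardinal.aleph0 ∧ f ∈ DenLevel a b α ∧
        ∀ x ∈ Icc a b, F x = denjoyIntegral a x f,
      (∃ α : Ordinal.{0}, α.card ≤ Cardinal.aleph0 ∧
          derivIter (DfF a b f F) (Icc a b) (α + 1) = ∅) ∧
        ∀ᵐ x ∂(volume.restrict (Icc a b)), HasDerivAt F (f x) x,
      (∃ α : Ordinal.{0}, α.card ≤ Cardinal.aleph0 ∧
          derivIter (DF a b F) (Icc a b) (α + 1) = ∅) ∧
        ∀ᵐ x ∂(volume.restrict (Icc a b)), HasDerivAt F (f x) x] := by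
  have hiff := denjoyIntegrable_and_eq_denjoyIntegral_iff (f := f) (F := F) hab.le
  tfae_have 1 → 2 := fun h =>
    have ⟨α, hα, hfα⟩ := (hiff.1 h).inDenHierarchy hab
    ⟨α, hα, hfα, h.2⟩
  tfae_have 2 → 1 := fun ⟨_, _, hfα, hF⟩ => ⟨denjoyIntegrable_of_mem_denLevel hab.le hfα, hF⟩
  tfae_have 1 ↔ 4 := by
    rw [hiff, HasDenjoyIntegralFn, acgStar_iff_exists_derivIter_DF_eq_empty]
    simp only [hFc, hFa, true_and]
  tfae_have 3 ↔ 4 := and_congr_left fun hder => by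
    rw [(isClosedDerivation_DF a b F).derivIter_congr isClosed_Icc
      fun K hK hKab => (DfF_eq_DF hFc hder hK hKab).symm]
  tfae_finish

/-- Equivalent characterizations of Denjoy integration. -/
theorem denjoy_tfae (a b : ℝ) (hab : a < b) (f F : ℝ → ℝ) (hf : Measurable f)
    (hFc : ContinuousOn F (Icc a b)) (hFa : F a = 0) :
    List.TFAE [
      DenjoyIntegrable a b f ∧ ∀ x ∈ Icc a b, F x = denjoyIntegral a x f,
      ∃ α : Ordinal.{0}, α.card ≤ Cardinal.aleph0 ∧ f ∈ DenLevel a b α ∧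
        ∀ x ∈ Icc a b, F x = denjoyIntegral a x f,
      (∃ α : Ordinal.{0}, α.card ≤ Cardinal.aleph0 ∧
          derivIter (DfF a b f F) (Icc a b) (α + 1) = ∅) ∧
        ∀ᵐ x ∂(volume.restrict (Icc a b)), HasDerivAt F (f x) x,
      (∃ α : Ordinal.{0}, α.card ≤ Cardinal.aleph0 ∧
          derivIter (DF a b F) (Icc a b) (α + 1) = ∅) ∧
        ∀ᵐ x ∂(volume.restrict (Icc a b)), HasDerivAt F (f x) x] :=
  denjoy_tfae_general a b hab f F hFc hFa
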